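/- arXiv:2102.05347 — 9 statements merged into one kernel-verified Lean document; each statement's English description precedes it below -/
import Mathlib

section
/- Let n ≥ k ≥ 1, let r with 1 ≤ r < k, and let ε, ζ ∈ (0,1]. Let μ be a function from the k-element subsets of [n]={1,…,n} to the nonnegative reals, not identically zero. Suppose that for every λ ∈ ℝ^n_{≥0} and every C ⊆ [n] such that the density ν(W) := 1[C⊆W]·μ(W)·∏_{i∈W} λ_i on k-element subsets is not identically zero, the conductance of the k↔(k−r) down-up walk on ν is at least ε. If S is a k-element subset with μ(S) > 0 that is an (r,ζ)-approximate local maximum for μ, then for every k-element subset T of [n] one has μ(T) ≤ (k^r/(ε·ζ))^k · μ(S). -/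
open Finset

/-- The family of `k`-element subsets of `Fin n` (representing `[n] = {1,…,n}`). -/
def kSets (n k : ℕ) : Finset (Finset (Fin n)) :=
  Finset.univ.powersetCard k

/-- The stationary distribution `π = ν / (Σ_W ν(W))` of the down-up walk on the density `ν`. -/
noncomputable def piDist (n k : ℕ) (ν : Finset (Fin n) → ℝ) (S : Finset (Fin n)) : ℝ :=
  ν S / ∑ W ∈ kSets n k, ν W

/-- The transition probability of the `k ↔ (k-r)` down-up walk on the density `ν`:
`P(S,S') = Σ_{T ⊆ S ∩ S', |T| = k-r} binom(k, k-r)⁻¹ · ν(S') / (Σ_{W ⊇ T, |W| = k} ν(W))`. -/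
noncomputable def transP (n k r : ℕ) (ν : Finset (Fin n) → ℝ) (S S' : Finset (Fin n)) : ℝ :=
  ∑ T ∈ (S ∩ S').powersetCard (k - r),
    ((k.choose (k - r) : ℝ))⁻¹ * ν S' /
      ∑ W ∈ (kSets n k).filter (fun W => T ⊆ W), ν W

/-- "The conductance of the `k ↔ (k-r)` down-up walk on `ν` is at least `ε`": for every
collection `𝒮` of `k`-element subsets with `0 < π(𝒮) ≤ 1/2`, the ergodic flow out of `𝒮`
is at least `ε · π(𝒮)`. -/
def ConductanceGE (n k r : ℕ) (ν : Finset (Fin n) → ℝ) (ε : ℝ) : Prop :=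
  ∀ 𝒮 ⊆ kSets n k,
    0 < ∑ S ∈ 𝒮, piDist n k ν S →
    (∑ S ∈ 𝒮, piDist n k ν S) ≤ 1 / 2 →
    ε * ∑ S ∈ 𝒮, piDist n k ν S ≤
      ∑ S ∈ 𝒮, ∑ S' ∈ kSets n k \ 𝒮, piDist n k ν S * transP n k r ν S S'

lemma aux_choose (k : ℕ) (r : ℕ) (hr : 1 ≤ r) (hrk : r < k) :
    (k + r).choose r ≤ k ^ r + 1 := by
  induction r, hr using Nat.le_induction with
  | base => simp
  | succ m hm ih =>
    have ih := ih (by omega)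
    have h1 : (k + m + 1) * (k + m).choose m = (k + m + 1).choose (m + 1) * (m + 1) :=
      Nat.add_one_mul_choose_eq (k + m) m
    have hkm : k ≤ k ^ m := Nat.le_self_pow (by omega) k
    have h2 : (k + m + 1).choose (m + 1) * (m + 1) ≤ (k ^ (m + 1) + 1) * (m + 1) := by
      rw [← h1, pow_succ]
      refine (Nat.mul_le_mul_left _ ih).trans ?_
      rcases Nat.lt_or_ge m 2 with h | h
      · have : m = 1 := by omega
        subst this
        obtain ⟨j, rfl⟩ : ∃ j, k = j + 3 := ⟨k - 3, by omega⟩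
        ring_nf
        nlinarith
      · generalize k ^ m = q at hkm
        obtain ⟨j, rfl⟩ : ∃ j, k = j + 4 := ⟨k - 4, by omega⟩
        obtain ⟨i, rfl⟩ : ∃ i, m = i + 2 := ⟨m - 2, by omega⟩
        obtain ⟨p, rfl⟩ : ∃ p, q = j + 4 + p := ⟨q - (j + 4), by omega⟩
        have := Nat.zero_le (i * j * p)
        have := Nat.zero_le (i * j * j)
        ring_nf
        nlinarith [Nat.zero_le (i * j), Nat.zero_le (i * p), Nat.zero_le (p * j), Nat.zero_le (j * j)]
    exact Nat.le_of_mul_le_mul_right h2 (by omega)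

lemma aux_count (n k r : ℕ) (hr : 1 ≤ r) (hrk : r < k) (S T A : Finset (Fin n))
    (hS : S.card = k) (hT : T.card = k) (hA : A ⊆ S) (hAc : A.card = k - r) :
    (((kSets n k).erase S).filter (fun W => A ⊆ W ∧ W ⊆ S ∪ T)).card ≤ k ^ r := by
  have hmem : S ∈ (kSets n k).filter (fun W => A ⊆ W ∧ W ⊆ S ∪ T) := by
    simp [kSets, mem_powersetCard, hS, hA, subset_union_left]
  rw [filter_erase, card_erase_of_mem hmem]
  have h1 : ((kSets n k).filter (fun W => A ⊆ W ∧ W ⊆ S ∪ T)).card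
      ≤ (powersetCard r ((S ∪ T) \ A)).card := by
    apply card_le_card_of_injOn (fun W => W \ A)
    · intro W hW
      simp only [kSets, coe_filter, mem_powersetCard, Set.mem_ofPred_eq] at hW
      obtain ⟨⟨-, hWc⟩, hAW, hWU⟩ := hW
      simp only [mem_coe, mem_powersetCard]
      refine ⟨sdiff_subset_sdiff hWU le_rfl, ?_⟩
      rw [card_sdiff_of_subset hAW]; omega
    · intro W hW W' hW' h
      simp only [kSets, coe_filter, mem_powersetCard, Set.mem_ofPred_eq] at hW hW'
      simp only at h
      rw [← sdiff_union_of_subset hW.2.1, h, sdiff_union_of_subset hW'.2.1]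
  have h2 : ((S ∪ T) \ A).card ≤ k + r := by
    rw [card_sdiff_of_subset (hA.trans subset_union_left)]
    have := card_union_le S T
    omega
  rw [card_powersetCard] at h1
  have h3 := Nat.choose_le_choose r h2
  have h4 := aux_choose k r hr hrk
  omega

/-- If all down-up walks on conditioned external-field tilts of `μ` have conductance at least
`ε`, then any `(r,ζ)`-approximate local maximum `S` of `μ` is a `(k^r/(ε·ζ))^k`-approximate
global maximum. -/
theorem fast_mixing_implies_local_search_guarantee
    (n k r : ℕ) (ε ζ : ℝ)
    (hk : 1 ≤ k) (hkn : k ≤ n) (hr : 1 ≤ r) (hrk : r < k)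
    (hε : 0 < ε) (hε1 : ε ≤ 1) (hζ : 0 < ζ) (hζ1 : ζ ≤ 1)
    (μ : Finset (Fin n) → ℝ)
    (hμnonneg : ∀ S : Finset (Fin n), S.card = k → 0 ≤ μ S)
    (hμnontriv : ∃ S : Finset (Fin n), S.card = k ∧ μ S ≠ 0)
    (hcond : ∀ lam : Fin n → ℝ, (∀ i, 0 ≤ lam i) → ∀ C : Finset (Fin n),
      (∃ W : Finset (Fin n), W.card = k ∧
        (if C ⊆ W then μ W * ∏ i ∈ W, lam i else 0) ≠ 0) →
      ConductanceGE n k r (fun W => if C ⊆ W then μ W * ∏ i ∈ W, lam i else 0) ε)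
    (S : Finset (Fin n)) (hS : S.card = k) (hSpos : 0 < μ S)
    (hloc : ∀ T : Finset (Fin n), T.card = k → (S \ T).card ≤ r → ζ * μ T ≤ μ S) :
    ∀ T : Finset (Fin n), T.card = k →
      μ T ≤ ((k : ℝ) ^ r / (ε * ζ)) ^ k * μ S := by
  intro T hT
  by_cases hST : S = T
  · subst hST
    have : (1 : ℝ) ≤ (k : ℝ) ^ r / (ε * ζ) := by
      rw [one_le_div (by positivity)]
      have h1 : (1 : ℝ) ≤ (k : ℝ) ^ r := one_le_pow₀ (by exact_mod_cast hk)
      have h2 : ε * ζ ≤ 1 := mul_le_one₀ hε1 hζ.le hζ1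
      linarith
    exact le_mul_of_one_le_left hSpos.le (one_le_pow₀ this)
  have hkpos : (0 : ℝ) < (k : ℝ) ^ r := by
    have : (0 : ℝ) < k := by exact_mod_cast hk
    positivity
  set t : ℝ := ε * ζ / (k : ℝ) ^ r with ht
  have ht0 : 0 < t := by positivity
  have ht1 : t ≤ 1 := by
    rw [ht, div_le_one hkpos]
    have h1 : (1 : ℝ) ≤ (k : ℝ) ^ r := one_le_pow₀ (by exact_mod_cast hk)
    have h2 : ε * ζ ≤ 1 := mul_le_one₀ hε1 hζ.le hζ1
    linarith
  set lam : Fin n → ℝ := fun i => if i ∈ S then 1 else if i ∈ T then t else 0 with hlam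
  have hlam0 : ∀ i, 0 ≤ lam i := by
    intro i; simp only [hlam]; split_ifs <;> linarith
  have hlam1 : ∀ i, lam i ≤ 1 := by
    intro i; simp only [hlam]; split_ifs <;> linarith
  set ν : Finset (Fin n) → ℝ := fun W => if ∅ ⊆ W then μ W * ∏ i ∈ W, lam i else 0 with hν
  have hνW : ∀ W, ν W = μ W * ∏ i ∈ W, lam i := by intro W; simp [hν]
  have hνS : ν S = μ S := by
    rw [hνW, prod_eq_one, mul_one]
    intro i hi; simp [hlam, hi]
  have hν0 : ∀ W ∈ kSets n k, 0 ≤ ν W := by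
    intro W hW
    rw [hνW]
    simp only [kSets, mem_powersetCard] at hW
    exact mul_nonneg (hμnonneg W hW.2) (prod_nonneg fun i _ => hlam0 i)
  have hνT : μ T * t ^ k ≤ ν T := by
    rw [hνW]
    refine mul_le_mul_of_nonneg_left ?_ (hμnonneg T hT)
    rw [← hT, ← prod_const]
    refine prod_le_prod (fun i _ => ht0.le) ?_
    intro i hi
    simp only [hlam, hi, if_true]; split_ifs <;> linarith
  have hSm : S ∈ kSets n k := by simp [kSets, mem_powersetCard, hS]
  have hTm : T ∈ kSets n k := by simp [kSets, mem_powersetCard, hT]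
  have hprod : ∀ W : Finset (Fin n), W.card = k → W ≠ S → ∏ i ∈ W, lam i ≤ t := by
    intro W hW hne
    obtain ⟨i, hiW, hiS⟩ : ∃ i ∈ W, i ∉ S := by
      by_contra! h
      exact hne (eq_of_subset_of_card_le h (by omega))
    rw [← mul_prod_erase W lam hiW]
    have h1 : lam i ≤ t := by
      simp only [hlam, hiS, if_false]; split_ifs <;> linarith
    have h2 : ∏ x ∈ W.erase i, lam x ≤ 1 :=
      prod_le_one (fun i _ => hlam0 i) (fun i _ => hlam1 i)
    have h3 : 0 ≤ ∏ x ∈ W.erase i, lam x := prod_nonneg (fun i _ => hlam0 i)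
    nlinarith [hlam0 i]
  have hout : ∀ W : Finset (Fin n), ¬ W ⊆ S ∪ T → ν W = 0 := by
    intro W hW
    obtain ⟨i, hiW, hi⟩ := not_subset.mp hW
    rw [hνW, prod_eq_zero hiW, mul_zero]
    simp only [mem_union, not_or] at hi
    simp [hlam, hi.1, hi.2]
  -- key local bound
  have hkey : ∀ A ∈ powersetCard (k - r) S,
      ∑ W ∈ ((kSets n k).erase S).filter (fun W => A ⊆ W), ν W ≤ ε * μ S := by
    intro A hA
    rw [mem_powersetCard] at hA
    have h1 : ∑ W ∈ ((kSets n k).erase S).filter (fun W => A ⊆ W), ν W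
        = ∑ W ∈ ((kSets n k).erase S).filter (fun W => A ⊆ W ∧ W ⊆ S ∪ T), ν W := by
      rw [← filter_filter]
      symm
      apply sum_filter_of_ne
      intro W _ h
      by_contra h'
      exact h (hout W h')
    rw [h1]
    have h2 : ∀ W ∈ ((kSets n k).erase S).filter (fun W => A ⊆ W ∧ W ⊆ S ∪ T),
        ν W ≤ μ S / ζ * t := by
      intro W hW
      simp only [mem_filter, mem_erase, kSets, mem_powersetCard] at hW
      obtain ⟨⟨hne, -, hWc⟩, hAW, -⟩ := hW
      have hd : (S \ W).card ≤ r := by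
        have := card_le_card (sdiff_subset_sdiff (le_refl S) hAW)
        rw [card_sdiff_of_subset hA.1, hA.2] at this
        omega
      have h3 : μ W ≤ μ S / ζ := by
        rw [le_div_iff₀ hζ, mul_comm]; exact hloc W hWc hd
      rw [hνW]
      exact mul_le_mul h3 (hprod W hWc hne) (prod_nonneg fun i _ => hlam0 i) (by positivity)
    refine (sum_le_card_nsmul _ _ _ h2).trans ?_
    rw [nsmul_eq_mul]
    have h4 : ((((kSets n k).erase S).filter (fun W => A ⊆ W ∧ W ⊆ S ∪ T)).card : ℝ)
        ≤ (k : ℝ) ^ r := by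
      exact_mod_cast aux_count n k r hr hrk S T A hS hT hA.1 hA.2
    refine (mul_le_mul_of_nonneg_right h4 (by positivity)).trans ?_
    rw [ht]
    apply le_of_eq
    field_simp
  have hZ : 0 < ∑ W ∈ kSets n k, ν W :=
    lt_of_lt_of_le (hνS ▸ hSpos) (single_le_sum hν0 hSm)
  have hπ : 0 < piDist n k ν S := by
    unfold piDist
    rw [hνS]; positivity
  have hflow : ∑ S' ∈ kSets n k \ {S}, transP n k r ν S S' < ε := by
    have e1 : ∑ S' ∈ kSets n k \ {S}, transP n k r ν S S'
        = ∑ A ∈ powersetCard (k - r) S, ((k.choose (k - r) : ℝ))⁻¹ *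
          ((∑ W ∈ ((kSets n k).erase S).filter (fun W => A ⊆ W), ν W) /
            ∑ W ∈ (kSets n k).filter (fun W => A ⊆ W), ν W) := by
      rw [sdiff_singleton_eq_erase]
      unfold transP
      have e2 : ∀ S' ∈ (kSets n k).erase S,
          (∑ A ∈ (S ∩ S').powersetCard (k - r), ((k.choose (k - r) : ℝ))⁻¹ * ν S' /
            ∑ W ∈ (kSets n k).filter (fun W => A ⊆ W), ν W)
          = ∑ A ∈ S.powersetCard (k - r), if A ⊆ S' then
            ((k.choose (k - r) : ℝ))⁻¹ * ν S' /
            ∑ W ∈ (kSets n k).filter (fun W => A ⊆ W), ν W else 0 := by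
        intro S' _
        rw [← sum_filter]
        congr 1
        ext A
        simp only [mem_powersetCard, mem_filter, subset_inter_iff]
        tauto
      rw [sum_congr rfl e2, sum_comm]
      refine sum_congr rfl fun A _ => ?_
      rw [← sum_filter, sum_div, mul_sum]
      refine sum_congr rfl fun W _ => ?_
      rw [mul_div_assoc]
    rw [e1]
    have hc : (0 : ℝ) < (k.choose (k - r) : ℝ) := by
      exact_mod_cast Nat.choose_pos (Nat.sub_le k r)
    have e3 : ∑ A ∈ powersetCard (k - r) S, ((k.choose (k - r) : ℝ))⁻¹ * ε = ε := by
      rw [sum_const, card_powersetCard, hS, nsmul_eq_mul]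
      field_simp
    rw [← e3]
    apply sum_lt_sum_of_nonempty
    · rw [powersetCard_nonempty]; omega
    · intro A hA
      have hb := hkey A hA
      rw [mem_powersetCard] at hA
      have hd : ∑ W ∈ (kSets n k).filter (fun W => A ⊆ W), ν W
          = μ S + ∑ W ∈ ((kSets n k).erase S).filter (fun W => A ⊆ W), ν W := by
        rw [filter_erase, ← hνS, add_sum_erase]
        simp [hSm, hA.1]
      have hnn : 0 ≤ ∑ W ∈ ((kSets n k).erase S).filter (fun W => A ⊆ W), ν W := by
        apply sum_nonneg
        intro W hW
        exact hν0 W (mem_of_mem_erase (mem_filter.mp hW).1)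
      rw [hd]
      refine mul_lt_mul_of_pos_left ?_ (by positivity)
      generalize (∑ W ∈ ((kSets n k).erase S).filter (fun W => A ⊆ W), ν W) = x at hb hnn
      rw [div_lt_iff₀ (by linarith)]
      rcases hnn.eq_or_lt with h | h
      · rw [← h]
        have := mul_pos hε hSpos
        linarith
      · have := mul_pos hε h
        linarith
  have hhalf : 1 / 2 < piDist n k ν S := by
    by_contra! hle
    have hC := hcond lam hlam0 ∅ ⟨S, hS, by
      change ν S ≠ 0
      rw [hνS]; exact hSpos.ne'⟩
    have := hC {S} (by simpa using hSm) (by rw [sum_singleton]; exact hπ) (by rw [sum_singleton]; exact hle)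
    rw [sum_singleton, sum_singleton, ← mul_sum, mul_comm] at this
    exact absurd (le_of_mul_le_mul_left this hπ) (not_le.mpr hflow)
  have hsum : ν S + ν T ≤ ∑ W ∈ kSets n k, ν W := by
    rw [← sum_pair hST]
    apply sum_le_sum_of_subset_of_nonneg
    · intro W hW
      simp only [mem_insert, mem_singleton] at hW
      rcases hW with rfl | rfl <;> assumption
    · intro W hW _
      exact hν0 W hW
  unfold piDist at hhalf
  rw [lt_div_iff₀ hZ] at hhalf
  have hfin : μ T * t ^ k ≤ μ S := by linarith
  have hinv : (k : ℝ) ^ r / (ε * ζ) = t⁻¹ := by rw [ht, inv_div]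
  rw [hinv, inv_pow, inv_mul_eq_div, le_div_iff₀ (by positivity)]
  exact hfin
end

section
/- Let n ≥ k ≥ 1, let r with 1 ≤ r < k, and let ε ∈ (0,1]. Let μ be a function from the k-element subsets of [n]={1,…,n} to the nonnegative reals, not identically zero. Suppose that for every λ ∈ ℝ^n_{≥0} and every C ⊆ [n] such that the density ν(W) := 1[C⊆W]·μ(W)·∏_{i∈W} λ_i on k-element subsets is not identically zero, the conductance of the k↔(k−r) down-up walk on ν is at least ε. Then μ satisfies weak (r, k^r/ε)-approximate exchange: for all k-element subsets S,T with μ(S) > 0, μ(T) > 0 and S ≠ T, there exist s ∈ {1,…,r} and U ∈ E^s(S,T) such that μ(S) ≤ (k^r/ε) · μ(S Δ U) · (μ(S)/μ(T))^{s/d(S,T)}. -/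
open Finset

/-- `E^i(S,T)`, the set of `i`-exchanges between `S` and `T`: subsets `U` of the symmetric
difference `S Δ T` with `|U ∩ S| = |U ∩ T| = i`. -/
def exch {n : ℕ} (S T : Finset (Fin n)) (i : ℕ) : Finset (Finset (Fin n)) :=
  (symmDiff S T).powerset.filter (fun U => (U ∩ S).card = i ∧ (U ∩ T).card = i)

lemma choose_bound_aux (r k : ℕ) (hr : 1 ≤ r) (hrk : r < k) :
    (k + r).choose r ≤ k ^ r + 1 := by
  induction r, hr using Nat.le_induction with
  | base => simp
  | succ m hm ih =>
    have ih := ih (by omega)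
    have h := Nat.add_one_mul_choose_eq (k + m) m
    have hk3 : 3 ≤ k := by omega
    by_cases h1 : m = 1
    · subst h1
      have e : (k + (1 + 1)).choose (1 + 1) * 2 = (k + 2) * (k + 1) := by
        simp at h; have : k + (1+1) = k + 1 + 1 := by ring
        rw [this]; simp; linarith
      have : (k + (1 + 1)).choose (1 + 1) * 2 ≤ (k ^ (1 + 1) + 1) * 2 := by
        rw [e]; norm_num; nlinarith
      omega
    · have hm2 : 2 ≤ m := by omega
      have hkm : 1 ≤ k ^ m := Nat.one_le_pow _ _ (by omega)
      have e : (k + (m + 1)).choose (m + 1) * (m + 1) ≤ (k ^ (m + 1) + 1) * (m + 1) := by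
        have : k + (m + 1) = k + m + 1 := by ring
        rw [this, ← h, pow_succ]
        have h2 : (k + m + 1) * (k + m).choose m ≤ (k + m + 1) * (k ^ m + 1) :=
          Nat.mul_le_mul_left _ ih
        refine h2.trans ?_
        obtain ⟨a, rfl⟩ : ∃ a, m = a + 2 := ⟨m - 2, by omega⟩
        obtain ⟨b, rfl⟩ : ∃ b, k = b + 3 := ⟨k - 3, by omega⟩
        generalize (b + 3) ^ (a + 2) = x at *
        obtain ⟨y, rfl⟩ : ∃ y, x = y + 1 := ⟨x - 1, by omega⟩
        ring_nf
        nlinarith [Nat.zero_le (a*b), Nat.zero_le (a*b*y), Nat.zero_le (b*y), Nat.zero_le (a*y)]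
      exact Nat.le_of_mul_le_mul_right e (by omega)

lemma count_aux {n : ℕ} (k r : ℕ) (hr : 1 ≤ r) (hrk : r < k) (S T T' : Finset (Fin n))
    (hS : S.card = k) (hT : T.card = k) (hT' : T' ⊆ S) (hc : T'.card = k - r) :
    (((kSets n k \ {S}).filter (fun W => T' ⊆ W)).filter (fun W => W ⊆ S ∪ T)).card ≤ k ^ r := by
  set F := ((kSets n k \ {S}).filter (fun W => T' ⊆ W)).filter (fun W => W ⊆ S ∪ T) with hF
  have hSF : S ∉ F := by simp [hF]
  have h1 : (insert S F).card ≤ (((S ∪ T) \ T').powersetCard r).card := by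
    apply Finset.card_le_card_of_injOn (fun W => W \ T')
    · intro W hW
      have hW' : W.card = k ∧ T' ⊆ W ∧ W ⊆ S ∪ T := by
        rcases Finset.mem_insert.1 (Finset.mem_coe.1 hW) with rfl | h
        · exact ⟨hS, hT', Finset.subset_union_left⟩
        · simp [hF, kSets] at h
          exact ⟨h.1.1.1, h.1.2, h.2⟩
      simp only [Finset.mem_coe, Finset.mem_powersetCard]
      refine ⟨Finset.sdiff_subset_sdiff hW'.2.2 le_rfl, ?_⟩
      rw [Finset.card_sdiff_of_subset hW'.2.1]; omega
    · intro W hW V hV h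
      have key : ∀ W ∈ insert S F, T' ⊆ W := by
        intro W hW
        rcases Finset.mem_insert.1 hW with rfl | h
        · exact hT'
        · simp [hF, kSets] at h
          exact h.1.2
      have := congrArg (fun X => X ∪ T') h
      simpa [Finset.sdiff_union_of_subset (key W hW), Finset.sdiff_union_of_subset (key V hV)] using this
  rw [Finset.card_insert_of_notMem hSF, Finset.card_powersetCard] at h1
  have h2 : ((S ∪ T) \ T').card ≤ k + r := by
    rw [Finset.card_sdiff_of_subset (hT'.trans Finset.subset_union_left)]
    have := Finset.card_union_le S T
    omega
  have h3 := Nat.choose_le_choose r h2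
  have h4 := choose_bound_aux r k hr hrk
  omega

lemma flow_aux (n k r : ℕ) (ε : ℝ) (hr : 1 ≤ r) (hrk : r < k) (hε : 0 < ε)
    (ν : Finset (Fin n) → ℝ) (S T : Finset (Fin n)) (hS : S.card = k) (hT : T.card = k)
    (hST : S ≠ T)
    (h0 : ∀ W : Finset (Fin n), W.card = k → 0 ≤ ν W) (hpos : 0 < ν S) (heq : ν T = ν S)
    (hsupp : ∀ W : Finset (Fin n), ¬ W ⊆ S ∪ T → ν W = 0)
    (hsmall : ∀ W : Finset (Fin n), W.card = k → W ≠ S → (W \ S).card ≤ r →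
      ν W < ε / (k : ℝ) ^ r * ν S)
    (hcond : ConductanceGE n k r ν ε) : False := by
  have hSk : S ∈ kSets n k := by simp [kSets, hS]
  have hTk : T ∈ kSets n k := by simp [kSets, hT]
  have hk0 : (0 : ℝ) < (k : ℝ) ^ r := by
    have : 0 < k := by omega
    positivity
  have h0' : ∀ W ∈ kSets n k, 0 ≤ ν W := fun W hW => h0 W (by simpa [kSets] using hW)
  have hZ : ν S + ν T ≤ ∑ W ∈ kSets n k, ν W := by
    rw [← Finset.sum_pair hST]
    apply Finset.sum_le_sum_of_subset_of_nonneg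
    · intro x hx
      simp at hx
      rcases hx with rfl | rfl <;> assumption
    · intro i hi _; exact h0' i hi
  have hZpos : 0 < ∑ W ∈ kSets n k, ν W := by linarith
  have hpi : 0 < piDist n k ν S := div_pos hpos hZpos
  have hmain := hcond {S} (by simpa using hSk) (by simpa using hpi) (by
    simp only [Finset.sum_singleton, piDist]
    rw [div_le_div_iff₀ hZpos (by norm_num)]; linarith)
  simp only [Finset.sum_singleton, ← Finset.mul_sum] at hmain
  rw [mul_comm] at hmain
  have hmain := le_of_mul_le_mul_left hmain hpi
  have hcpos : (0 : ℝ) < (k.choose (k - r) : ℝ) := by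
    exact_mod_cast Nat.choose_pos (by omega)
  have hswap : ∑ S' ∈ kSets n k \ {S}, transP n k r ν S S' =
      ∑ T' ∈ S.powersetCard (k - r), ∑ S' ∈ (kSets n k \ {S}).filter (fun W => T' ⊆ W),
        ((k.choose (k - r) : ℝ))⁻¹ * ν S' /
          ∑ W ∈ (kSets n k).filter (fun W => T' ⊆ W), ν W := by
    unfold transP
    apply Finset.sum_comm'
    intro x y
    simp only [Finset.mem_powersetCard, Finset.mem_filter, Finset.subset_inter_iff]
    tauto
  rw [hswap] at hmain
  have hbound : ∀ T' ∈ S.powersetCard (k - r),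
      ∑ S' ∈ (kSets n k \ {S}).filter (fun W => T' ⊆ W),
        ((k.choose (k - r) : ℝ))⁻¹ * ν S' /
          ∑ W ∈ (kSets n k).filter (fun W => T' ⊆ W), ν W
        < ((k.choose (k - r) : ℝ))⁻¹ * ε := by
    intro T' hT'
    obtain ⟨hT'S, hT'c⟩ := Finset.mem_powersetCard.1 hT'
    have hZ' : ν S ≤ ∑ W ∈ (kSets n k).filter (fun W => T' ⊆ W), ν W := by
      apply Finset.single_le_sum (f := ν)
      · intro i hi; exact h0' i (Finset.mem_filter.1 hi).1
      · simp [hSk, hT'S]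
    rw [← Finset.sum_div, ← Finset.mul_sum, mul_div_assoc]
    apply mul_lt_mul_of_pos_left _ (inv_pos.2 hcpos)
    rw [div_lt_iff₀ (by linarith)]
    refine lt_of_lt_of_le ?_ (mul_le_mul_of_nonneg_left hZ' hε.le)
    have hcount := count_aux k r hr hrk S T T' hS hT hT'S hT'c
    have hfil : ∑ W ∈ (kSets n k \ {S}).filter (fun W => T' ⊆ W), ν W =
      ∑ W ∈ ((kSets n k \ {S}).filter (fun W => T' ⊆ W)).filter (fun W => W ⊆ S ∪ T), ν W := by
      symm
      apply Finset.sum_filter_of_ne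
      intro x _ hx
      by_contra hne
      exact hx (hsupp x hne)
    rw [hfil]
    have hlt : ∀ W ∈ ((kSets n k \ {S}).filter (fun W => T' ⊆ W)).filter (fun W => W ⊆ S ∪ T),
        ν W < ε / (k : ℝ) ^ r * ν S := by
      intro W hW
      simp [kSets] at hW
      apply hsmall W hW.1.1.1 hW.1.1.2
      have h1 : W \ S ⊆ W \ T' := Finset.sdiff_subset_sdiff le_rfl hT'S
      have h2 := Finset.card_le_card h1
      rw [Finset.card_sdiff_of_subset hW.1.2] at h2
      omega
    generalize ((kSets n k \ {S}).filter (fun W => T' ⊆ W)).filter (fun W => W ⊆ S ∪ T) = G at *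
    rcases G.eq_empty_or_nonempty with rfl | hG
    · simp; positivity
    · have h5 := Finset.sum_lt_sum_of_nonempty hG hlt
      rw [Finset.sum_const, nsmul_eq_mul] at h5
      refine h5.trans_le ?_
      have h6 : (G.card : ℝ) ≤ (k : ℝ) ^ r := by exact_mod_cast hcount
      calc (G.card : ℝ) * (ε / (k : ℝ) ^ r * ν S) ≤ (k : ℝ) ^ r * (ε / (k : ℝ) ^ r * ν S) := by
            gcongr
        _ = ε * ν S := by field_simp
  have hlt := Finset.sum_lt_sum_of_nonempty
    (Finset.powersetCard_nonempty.2 (by omega : k - r ≤ S.card)) hbound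
  rw [Finset.sum_const, Finset.card_powersetCard, hS, nsmul_eq_mul, mul_inv_cancel_left₀ hcpos.ne'] at hlt
  linarith

/-- If all down-up walks on conditioned external-field tilts of `μ` have conductance at least
`ε`, then `μ` satisfies weak `(r, k^r/ε)`-approximate exchange. -/
theorem fast_mixing_implies_weak_exchange
    (n k r : ℕ) (ε : ℝ)
    (hk : 1 ≤ k) (hkn : k ≤ n) (hr : 1 ≤ r) (hrk : r < k)
    (hε : 0 < ε) (hε1 : ε ≤ 1)
    (μ : Finset (Fin n) → ℝ)
    (hμnonneg : ∀ S : Finset (Fin n), S.card = k → 0 ≤ μ S)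
    (hμnontriv : ∃ S : Finset (Fin n), S.card = k ∧ μ S ≠ 0)
    (hcond : ∀ lam : Fin n → ℝ, (∀ i, 0 ≤ lam i) → ∀ C : Finset (Fin n),
      (∃ W : Finset (Fin n), W.card = k ∧
        (if C ⊆ W then μ W * ∏ i ∈ W, lam i else 0) ≠ 0) →
      ConductanceGE n k r (fun W => if C ⊆ W then μ W * ∏ i ∈ W, lam i else 0) ε) :
    ∀ S T : Finset (Fin n), S.card = k → T.card = k → 0 < μ S → 0 < μ T → S ≠ T →
      ∃ s ∈ Finset.Icc 1 r, ∃ U ∈ exch S T s,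
        μ S ≤ ((k : ℝ) ^ r / ε) * μ (symmDiff S U) *
          (μ S / μ T) ^ ((s : ℝ) / ((S \ T).card : ℝ)) := by
  intro S T hS hT hμS hμT hST
  by_contra hcon
  push Not at hcon
  set d := (S \ T).card with hd
  have hdpos : 0 < d := by
    rw [hd, Finset.card_pos, Finset.sdiff_nonempty]
    intro h
    exact hST (Finset.eq_of_subset_of_card_le h (by omega))
  have hdT : (T \ S).card = d := by
    rw [hd]
    exact Finset.card_sdiff_comm (by omega)
  set t : ℝ := (μ S / μ T) ^ ((1 : ℝ) / (d : ℝ)) with ht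
  have hq : 0 < μ S / μ T := div_pos hμS hμT
  have htpos : 0 < t := Real.rpow_pos_of_pos hq _
  have htpow : ∀ s : ℕ, t ^ s = (μ S / μ T) ^ ((s : ℝ) / (d : ℝ)) := by
    intro s
    rw [ht, ← Real.rpow_natCast, ← Real.rpow_mul hq.le]
    congr 1
    ring
  set lam : Fin n → ℝ := fun i => if i ∈ S then 1 else if i ∈ T then t else 0 with hlam
  have hlam0 : ∀ i, 0 ≤ lam i := by
    intro i
    simp only [hlam]
    split_ifs <;> linarith
  have hprod : ∀ W : Finset (Fin n), W ⊆ S ∪ T → ∏ i ∈ W, lam i = t ^ (W \ S).card := by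
    intro W hW
    rw [← Finset.prod_sdiff (Finset.inter_subset_left : W ∩ S ⊆ W), Finset.sdiff_inter_self_left]
    have h1 : ∏ i ∈ W ∩ S, lam i = 1 := by
      apply Finset.prod_eq_one
      intro i hi
      simp [hlam, (Finset.mem_inter.1 hi).2]
    have h2 : ∏ i ∈ W \ S, lam i = ∏ i ∈ W \ S, t := by
      apply Finset.prod_congr rfl
      intro i hi
      have hi := Finset.mem_sdiff.1 hi
      have h3 := Finset.mem_union.1 (hW hi.1)
      have h4 : i ∈ T := by tauto
      simp [hlam, hi.2, h4]
    rw [h1, h2, Finset.prod_const, mul_one]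
  have hνS : (if S ∩ T ⊆ S then μ S * ∏ i ∈ S, lam i else 0) = μ S := by
    rw [if_pos Finset.inter_subset_left, hprod S Finset.subset_union_left]
    simp
  have hνT : (if S ∩ T ⊆ T then μ T * ∏ i ∈ T, lam i else 0) = μ S := by
    rw [if_pos Finset.inter_subset_right, hprod T Finset.subset_union_right, hdT, htpow,
      div_self (by exact_mod_cast hdpos.ne'), Real.rpow_one]
    field_simp
  have hc := hcond lam hlam0 (S ∩ T) ⟨S, hS, by rw [hνS]; exact hμS.ne'⟩
  have hzero : ∀ W : Finset (Fin n), ¬ W ⊆ S ∪ T → ∏ i ∈ W, lam i = 0 := by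
    intro W hW
    obtain ⟨i, hi, hi'⟩ := Finset.not_subset.1 hW
    apply Finset.prod_eq_zero hi
    simp only [Finset.mem_union, not_or] at hi'
    simp [hlam, hi'.1, hi'.2]
  have hkpos : (0 : ℝ) < (k : ℝ) ^ r := by
    have : 0 < k := by omega
    positivity
  refine flow_aux n k r ε hr hrk hε _ S T hS hT hST ?_ (by simp only [hνS]; exact hμS)
    (by simp only [hνS, hνT]) ?_ ?_ hc
  · intro W hW
    split_ifs
    · exact mul_nonneg (hμnonneg W hW) (Finset.prod_nonneg fun i _ => hlam0 i)
    · exact le_rfl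
  · intro W hW
    rw [hzero W hW]
    simp
  · intro W hW hWS hWr
    simp only [hνS]
    have hpos : 0 < ε / (k : ℝ) ^ r * μ S := by positivity
    by_cases hC : S ∩ T ⊆ W
    · rw [if_pos hC]
      by_cases hU : W ⊆ S ∪ T
      · rw [hprod W hU]
        have hs1 : 1 ≤ (W \ S).card := by
          rw [Nat.succ_le_iff, Finset.card_pos, Finset.sdiff_nonempty]
          intro h
          exact hWS (Finset.eq_of_subset_of_card_le h (by omega))
        have hSW : (S \ W).card = (W \ S).card := Finset.card_sdiff_comm (by omega)
        have hm : symmDiff S W ∈ exch S T (W \ S).card := by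
          simp only [exch, Finset.mem_filter, Finset.mem_powerset]
          refine ⟨?_, ?_, ?_⟩
          · intro i hi
            have h1 := @hC i
            have h2 := @hU i
            simp only [Finset.mem_symmDiff, Finset.mem_inter, Finset.mem_union] at *
            tauto
          · rw [← hSW]
            congr 1
            ext i
            simp only [Finset.mem_symmDiff, Finset.mem_inter, Finset.mem_sdiff]
            tauto
          · congr 1
            ext i
            have h1 := @hC i
            have h2 := @hU i
            simp only [Finset.mem_symmDiff, Finset.mem_inter, Finset.mem_union,
              Finset.mem_sdiff] at *
            tauto
        have h := hcon _ (Finset.mem_Icc.2 ⟨hs1, hWr⟩) _ hm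
        rw [symmDiff_symmDiff_cancel_left, ← htpow] at h
        calc μ W * t ^ (W \ S).card
            = ε / (k : ℝ) ^ r * ((k : ℝ) ^ r / ε * μ W * t ^ (W \ S).card) := by field_simp
          _ < ε / (k : ℝ) ^ r * μ S := by
            apply mul_lt_mul_of_pos_left h
            positivity
      · rw [hzero W hU]
        simpa using hpos
    · rw [if_neg hC]
      exact hpos
end

section
/- Let n ≥ k ≥ 1, r ≥ 1, ζ ∈ (0,1], and β ≥ ζ. Let μ be a function from the k-element subsets of [n]={1,…,n} to the nonnegative reals satisfying weak (r,β)-approximate exchange. If S is a k-element subset with μ(S) > 0 that is an (r,ζ)-approximate local maximum for μ, then for every k-element subset T of [n] one has μ(T) ≤ (β/ζ)^k · μ(S). -/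
open Finset

/-- If `μ` satisfies weak `(r,β)`-approximate exchange, then any `(r,ζ)`-approximate local
maximum is a `(β/ζ)^k`-approximate global maximum. -/
theorem weak_exchange_implies_local_search_guarantee
    (n k r : ℕ) (β ζ : ℝ)
    (hk : 1 ≤ k) (hkn : k ≤ n) (hr : 1 ≤ r)
    (hζ : 0 < ζ) (hζ1 : ζ ≤ 1) (hβ : ζ ≤ β)
    (μ : Finset (Fin n) → ℝ)
    (hμnonneg : ∀ S : Finset (Fin n), S.card = k → 0 ≤ μ S)
    (hexch : ∀ S T : Finset (Fin n), S.card = k → T.card = k →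
      0 < μ S → 0 < μ T → S ≠ T →
      ∃ s ∈ Finset.Icc 1 r, ∃ U ∈ exch S T s,
        μ S ≤ β * μ (symmDiff S U) * (μ S / μ T) ^ ((s : ℝ) / ((S \ T).card : ℝ)))
    (S : Finset (Fin n)) (hS : S.card = k) (hSpos : 0 < μ S)
    (hloc : ∀ T : Finset (Fin n), T.card = k → (S \ T).card ≤ r → ζ * μ T ≤ μ S) :
    ∀ T : Finset (Fin n), T.card = k → μ T ≤ (β / ζ) ^ k * μ S := by
  intro T hT
  have hb : 1 ≤ β / ζ := by rw [le_div_iff₀ hζ]; linarith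
  have hbk : 1 ≤ (β / ζ) ^ k := one_le_pow₀ hb
  by_cases hle : μ T ≤ μ S
  · nlinarith
  push Not at hle
  have hTpos : 0 < μ T := hSpos.trans hle
  have hne : S ≠ T := by
    rintro rfl
    exact lt_irrefl _ hle
  obtain ⟨s, hs, U, hU, h⟩ := hexch S T hS hT hSpos hTpos hne
  rw [Finset.mem_Icc] at hs
  simp only [exch, Finset.mem_filter, Finset.mem_powerset] at hU
  obtain ⟨hUsub, hUS, hUT⟩ := hU
  have hUmem : ∀ a ∈ U, (a ∈ S ∧ a ∉ T) ∨ (a ∈ T ∧ a ∉ S) := fun a ha =>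
    Finset.mem_symmDiff.1 (hUsub ha)
  have h1 : S \ symmDiff S U = U ∩ S := by
    ext a
    simp only [Finset.mem_sdiff, Finset.mem_symmDiff, Finset.mem_inter]
    tauto
  have h2 : symmDiff S U = (S \ U) ∪ (U ∩ T) := by
    ext a
    have := hUmem a
    simp only [Finset.mem_sdiff, Finset.mem_symmDiff, Finset.mem_inter, Finset.mem_union]
    tauto
  have h3 : Disjoint (S \ U) (U ∩ T) := by
    rw [Finset.disjoint_left]
    intro a ha hb
    exact (Finset.mem_sdiff.1 ha).2 (Finset.mem_inter.1 hb).1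
  have hW : (symmDiff S U).card = k := by
    rw [h2, Finset.card_union_of_disjoint h3, hUT, ← hUS, Finset.inter_comm U S,
      Finset.card_sdiff_add_card_inter, hS]
  have hl := hloc _ hW (by rw [h1, hUS]; exact hs.2)
  have hd : 0 < (S \ T).card := by
    rw [Finset.card_pos, Finset.sdiff_nonempty]
    intro hsub
    exact hne (Finset.eq_of_subset_of_card_le hsub (by omega))
  have hdk : (S \ T).card ≤ k := hS ▸ Finset.card_le_card Finset.sdiff_subset
  set d := (S \ T).card with hddef
  set x := μ S / μ T with hx
  have hx0 : 0 < x := div_pos hSpos hTpos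
  have hx1 : x ≤ 1 := by rw [hx, div_le_one hTpos]; exact hle.le
  set y := x ^ ((s : ℝ) / (d : ℝ)) with hy
  have hy0 : 0 < y := Real.rpow_pos_of_pos hx0 _
  have hyd : y ^ d = x ^ s := by
    rw [hy, ← Real.rpow_natCast, ← Real.rpow_mul hx0.le, div_mul_cancel₀, Real.rpow_natCast]
    exact_mod_cast hd.ne'
  have hβ0 : 0 < β := hζ.trans_le hβ
  have hWle : μ (symmDiff S U) ≤ μ S / ζ := by
    rw [le_div_iff₀ hζ]; linarith
  have h4 : μ S * 1 ≤ μ S * (β / ζ * y) := by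
    calc μ S * 1 = μ S := mul_one _
      _ ≤ β * μ (symmDiff S U) * y := h
      _ ≤ β * (μ S / ζ) * y := by gcongr
      _ = μ S * (β / ζ * y) := by ring
  have h5 : 1 ≤ β / ζ * y := le_of_mul_le_mul_left h4 hSpos
  have h6 : 1 ≤ (β / ζ) ^ k * x := by
    calc 1 ≤ (β / ζ * y) ^ d := one_le_pow₀ h5
      _ = (β / ζ) ^ d * x ^ s := by rw [mul_pow, hyd]
      _ ≤ (β / ζ) ^ k * x := by
        have : x ^ s ≤ x := pow_le_of_le_one hx0.le hx1 (by omega)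
        gcongr
  have h7 : μ T * 1 ≤ μ T * ((β / ζ) ^ k * x) := mul_le_mul_of_nonneg_left h6 hTpos.le
  have h8 : μ T * x = μ S := by rw [hx]; field_simp
  calc μ T = μ T * 1 := (mul_one _).symm
    _ ≤ _ := h7
    _ = (β / ζ) ^ k * (μ T * x) := by ring
    _ = _ := by rw [h8]
end

section
/- Let L be a real n×n matrix with L + Lᵀ positive semidefinite, let 1 ≤ k ≤ n, and let ζ ∈ (0,1]. Let μ(S) := det(L_S) on k-element subsets of [n]. If S is a k-element subset with det(L_S) > 0 that is a (2,ζ)-approximate local maximum for μ, then for every k-element subset T of [n] one has det(L_T) ≤ (k^4/ζ)^k · det(L_S). -/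
open Finset Matrix

/-- `det(L_S)`: the determinant of the principal submatrix of `L` with rows and columns
indexed by `S` (equal to `1` when `S = ∅`). -/
noncomputable def pminor {n : ℕ} (L : Matrix (Fin n) (Fin n) ℝ) (S : Finset (Fin n)) : ℝ :=
  (L.submatrix (fun i : {x // x ∈ S} => i.1) (fun j : {x // x ∈ S} => j.1)).det


/-- Strict positivity of the quadratic form. -/
def SPD {n : ℕ} (L : Matrix (Fin n) (Fin n) ℝ) : Prop :=
  ∀ v : Fin n → ℝ, v ≠ 0 → 0 < v ⬝ᵥ (L *ᵥ v)

/-- generating polynomial based at `S`, in the variables of `U`. -/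
noncomputable def genf {n : ℕ} (L : Matrix (Fin n) (Fin n) ℝ) (S U : Finset (Fin n))
    (z : Fin n → ℂ) : ℂ :=
  ∑ V ∈ U.powerset, (pminor L (symmDiff S V) : ℂ) * ∏ x ∈ V, z x

lemma det_expand {n : ℕ} (L : Matrix (Fin n) (Fin n) ℂ) (a b : Fin n → ℂ) :
    (Matrix.of fun i j => b i * L i j + a i * (1 : Matrix (Fin n) (Fin n) ℂ) i j).det =
      ∑ W : Finset (Fin n), (∏ i, W.piecewise b a i) *
        (L.submatrix (fun i : {x // x ∈ W} => i.1) (fun j : {x // x ∈ W} => j.1)).det := by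
  have h := (Matrix.detRowAlternating (n := Fin n) (R := ℂ)).toMultilinearMap.map_add_univ
    (fun i => b i • L i) (fun i => a i • (1 : Matrix (Fin n) (Fin n) ℂ) i)
  have h2 : (Matrix.of fun i j => b i * L i j + a i * (1 : Matrix (Fin n) (Fin n) ℂ) i j).det =
    (Matrix.detRowAlternating (n := Fin n) (R := ℂ)).toMultilinearMap
    ((fun i => b i • L i) + (fun i => a i • (1 : Matrix (Fin n) (Fin n) ℂ) i)) := by
    rfl
  rw [h2, h]
  refine Finset.sum_congr rfl fun W _ => ?_
  have h3 : (W.piecewise (fun i => b i • L i) (fun i => a i • (1 : Matrix (Fin n) (Fin n) ℂ) i)) =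
    fun i => (W.piecewise b a i) • (W.piecewise L.row (1 : Matrix (Fin n) (Fin n) ℂ).row i) := by
    funext i
    by_cases hi : i ∈ W
    · rw [Finset.piecewise_eq_of_mem _ _ _ hi, Finset.piecewise_eq_of_mem _ _ _ hi,
        Finset.piecewise_eq_of_mem _ _ _ hi]
      rfl
    · rw [Finset.piecewise_eq_of_notMem _ _ _ hi, Finset.piecewise_eq_of_notMem _ _ _ hi,
        Finset.piecewise_eq_of_notMem _ _ _ hi]
      rfl
  rw [h3, MultilinearMap.map_smul_univ, smul_eq_mul]
  congr 1
  have := Matrix.det_piecewise_one_eq_submatrix_det (R := ℂ) L W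
  exact this

lemma pminor_complex {n : ℕ} (L : Matrix (Fin n) (Fin n) ℝ) (W : Finset (Fin n)) :
    ((L.map (fun x : ℝ => (x : ℂ))).submatrix (fun i : {x // x ∈ W} => i.1)
      (fun j : {x // x ∈ W} => j.1)).det = (pminor L W : ℂ) := by
  unfold pminor
  have := (Complex.ofRealHom).map_det
    (L.submatrix (fun i : {x // x ∈ W} => i.1) (fun j : {x // x ∈ W} => j.1))
  simp only [Complex.ofRealHom_eq_coe] at this
  rw [this]
  rfl

lemma genf_ne_zero {n : ℕ} (L : Matrix (Fin n) (Fin n) ℝ) (hL : SPD L) (S U : Finset (Fin n))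
    (z : Fin n → ℂ) (hz : ∀ x ∈ U, 0 ≤ (z x).re) : genf L S U z ≠ 0 := by
  classical
  set z' : Fin n → ℂ := fun x => if x ∈ U then z x else 0 with hz'
  have hz'0 : ∀ x, 0 ≤ (z' x).re := by
    intro x; by_cases hx : x ∈ U <;> simp [hz', hx]; exact hz x hx
  set a : Fin n → ℂ := fun x => if x ∈ S then z' x else 1 with ha
  set b : Fin n → ℂ := fun x => if x ∈ S then 1 else z' x with hb
  have key : genf L S U z = (Matrix.of fun i j => b i * (L.map (fun x : ℝ => (x : ℂ))) i j +
      a i * (1 : Matrix (Fin n) (Fin n) ℂ) i j).det := by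
    rw [det_expand]
    have e1 : genf L S U z = ∑ V : Finset (Fin n),
        (pminor L (symmDiff S V) : ℂ) * ∏ x ∈ V, z' x := by
      unfold genf
      have : ∀ V ∈ U.powerset, (pminor L (symmDiff S V) : ℂ) * ∏ x ∈ V, z x =
          (pminor L (symmDiff S V) : ℂ) * ∏ x ∈ V, z' x := by
        intro V hV
        congr 1
        refine Finset.prod_congr rfl fun x hx => ?_
        simp [hz', Finset.mem_powerset.1 hV hx]
      rw [Finset.sum_congr rfl this]
      refine Finset.sum_subset (Finset.subset_univ _) ?_
      intro V _ hV
      rw [Finset.mem_powerset, Finset.not_subset] at hV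
      obtain ⟨x, hx, hxU⟩ := hV
      rw [Finset.prod_eq_zero hx (by simp [hz', hxU]), mul_zero]
    rw [e1]
    refine Finset.sum_bij' (fun V _ => symmDiff S V) (fun W _ => symmDiff S W)
      (by simp) (by simp) (by simp) (by simp) ?_
    intro V _
    rw [pminor_complex, mul_comm]
    congr 1
    rw [← Finset.prod_subset (Finset.subset_univ V)
      (f := (symmDiff S V).piecewise b a)]
    · refine Finset.prod_congr rfl fun x hx => ?_
      by_cases hS : x ∈ S <;> simp [Finset.piecewise, Finset.mem_symmDiff, hx, hS, ha, hb]
    · intro x _ hx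
      by_cases hS : x ∈ S <;> simp [Finset.piecewise, Finset.mem_symmDiff, hx, hS, ha, hb]
  rw [key]
  intro h0
  obtain ⟨v, hv0, hv⟩ := Matrix.exists_mulVec_eq_zero_iff.2 h0
  -- the image
  set y : Fin n → ℂ := (L.map (fun x : ℝ => (x : ℂ))) *ᵥ v with hy
  have hrow : ∀ i, b i * y i + a i * v i = 0 := by
    intro i
    have := congrFun hv i
    simp only [Matrix.mulVec, dotProduct, Matrix.of_apply, add_mul, Finset.sum_add_distrib,
      Pi.zero_apply] at this
    rw [← this, hy]
    simp only [Matrix.mulVec, dotProduct, Finset.mul_sum, mul_assoc]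
    congr 1
    simp [Matrix.one_apply]
  have hle : ∀ i, ((starRingEnd ℂ) (v i) * y i).re ≤ 0 := by
    intro i
    have h := hrow i
    have hzi := hz'0 i
    by_cases hS : i ∈ S
    · simp only [ha, hb, hS, if_true, one_mul] at h
      have : y i = - (z' i * v i) := eq_neg_of_add_eq_zero_left h
      rw [this]
      simp
      nlinarith [mul_nonneg hzi (sq_nonneg (v i).re), mul_nonneg hzi (sq_nonneg (v i).im)]
    · simp only [ha, hb, hS, if_false, one_mul] at h
      have : v i = - (z' i * y i) := eq_neg_of_add_eq_zero_right h
      rw [this]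
      simp
      nlinarith [mul_nonneg hzi (sq_nonneg (y i).re), mul_nonneg hzi (sq_nonneg (y i).im)]
  have hsum : ∑ i, ((starRingEnd ℂ) (v i) * y i).re =
      (fun i => (v i).re) ⬝ᵥ (L *ᵥ fun i => (v i).re) +
      (fun i => (v i).im) ⬝ᵥ (L *ᵥ fun i => (v i).im) := by
    simp only [dotProduct, ← Finset.sum_add_distrib]
    refine Finset.sum_congr rfl fun i _ => ?_
    have h1 : (y i).re = (L *ᵥ fun i => (v i).re) i := by
      simp [hy, Matrix.mulVec, dotProduct]
    have h2 : (y i).im = (L *ᵥ fun i => (v i).im) i := by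
      simp [hy, Matrix.mulVec, dotProduct]
    simp [h1, h2]
  have hneg : ∑ i, ((starRingEnd ℂ) (v i) * y i).re ≤ 0 := Finset.sum_nonpos fun i _ => hle i
  have hnn : ∀ w : Fin n → ℝ, 0 ≤ w ⬝ᵥ (L *ᵥ w) := by
    intro w
    by_cases hw : w = 0
    · simp [hw]
    · exact (hL w hw).le
  by_cases hre : (fun i => (v i).re) = 0
  · have him : (fun i => (v i).im) ≠ 0 := by
      intro him
      apply hv0
      funext i
      exact Complex.ext (congrFun hre i) (congrFun him i)
    linarith [hL _ him, hnn (fun i => (v i).re)]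
  · linarith [hL _ hre, hnn (fun i => (v i).im)]

lemma pminor_pos {n : ℕ} (L : Matrix (Fin n) (Fin n) ℝ) (hL : SPD L) (W : Finset (Fin n)) :
    0 < pminor L W := by
  set A := L.submatrix (fun i : {x // x ∈ W} => i.1) (fun j : {x // x ∈ W} => j.1) with hA
  have hApd : ∀ v : {x // x ∈ W} → ℝ, v ≠ 0 → 0 < v ⬝ᵥ (A *ᵥ v) := by
    intro v hv
    set w : Fin n → ℝ := fun i => if h : i ∈ W then v ⟨i, h⟩ else 0 with hw
    have hw0 : w ≠ 0 := by
      intro h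
      apply hv
      funext i
      have := congrFun h i.1
      simpa [hw] using this
    have hs : ∀ f : Fin n → ℝ, (∀ i, i ∉ W → f i = 0) → ∑ i, f i = ∑ i : {x // x ∈ W}, f i.1 := by
      intro f hf
      rw [Finset.sum_coe_sort W f]
      exact (Finset.sum_subset (Finset.subset_univ W) (fun i _ hi => hf i hi)).symm
    have := hL w hw0
    rw [dotProduct, hs _ (by intro i hi; simp [hw, hi])] at this
    convert this using 1
    rw [dotProduct]
    refine Finset.sum_congr rfl fun i _ => ?_
    rw [Matrix.mulVec, Matrix.mulVec, dotProduct, dotProduct,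
      hs _ (by intro i hi; simp [hw, hi])]
    simp [hw, hA]
  have hcont : Continuous fun t : ℝ => (t • (1 : Matrix {x // x ∈ W} {x // x ∈ W} ℝ) + (1 - t) • A).det := by
    apply Continuous.matrix_det
    fun_prop
  have hne : ∀ t ∈ Set.Icc (0 : ℝ) 1, (t • (1 : Matrix {x // x ∈ W} {x // x ∈ W} ℝ) + (1 - t) • A).det ≠ 0 := by
    intro t ht h0
    obtain ⟨v, hv0, hv⟩ := Matrix.exists_mulVec_eq_zero_iff.2 h0
    have h1 : v ⬝ᵥ ((t • (1 : Matrix {x // x ∈ W} {x // x ∈ W} ℝ) + (1 - t) • A) *ᵥ v) = 0 := by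
      rw [hv]; simp
    rw [Matrix.add_mulVec, Matrix.smul_mulVec, Matrix.smul_mulVec, Matrix.one_mulVec,
      dotProduct_add, dotProduct_smul, dotProduct_smul, smul_eq_mul, smul_eq_mul] at h1
    have h2 := hApd v hv0
    have h3 : 0 < v ⬝ᵥ v := by
      have h4 : 0 ≤ v ⬝ᵥ v := Finset.sum_nonneg fun i _ => mul_self_nonneg _
      exact lt_of_le_of_ne h4 (fun h => hv0 (dotProduct_self_eq_zero.1 h.symm))
    rcases eq_or_lt_of_le ht.1 with h | h
    · subst h; simp at h1; linarith
    · nlinarith [mul_pos h h3, mul_nonneg (sub_nonneg.2 ht.2) h2.le]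
  by_contra hneg
  have hneg' : A.det ≤ 0 := not_lt.1 hneg
  have := intermediate_value_Icc (zero_le_one (α := ℝ)) hcont.continuousOn
  obtain ⟨t, ht, hte⟩ := this (show (0 : ℝ) ∈ _ by simp [hneg'])
  exact hne t ht hte

lemma multiset_norm_lt (s : Multiset ℂ) (hs : ∀ r ∈ s, r.re < 0) :
    0 < ‖(s.map (fun r => 1 - r)).prod‖ ∧
    ‖(s.map (fun r => -1 - r)).prod‖ ≤ ‖(s.map (fun r => 1 - r)).prod‖ ∧
    (s ≠ 0 → ‖(s.map (fun r => -1 - r)).prod‖ < ‖(s.map (fun r => 1 - r)).prod‖) := by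
  induction s using Multiset.induction_on with
  | empty => simp
  | cons r s ih =>
    obtain ⟨h1, h2, -⟩ := ih (fun q hq => hs q (Multiset.mem_cons_of_mem hq))
    have hr : r.re < 0 := hs r (Multiset.mem_cons_self r s)
    have hlt : ‖-1 - r‖ < ‖1 - r‖ := by
      rw [← sq_lt_sq₀ (norm_nonneg _) (norm_nonneg _), Complex.sq_norm, Complex.sq_norm,
        Complex.normSq_apply, Complex.normSq_apply]
      simp
      nlinarith
    have hpos : 0 < ‖1 - r‖ := lt_of_le_of_lt (norm_nonneg _) hlt
    have hst : ‖-1 - r‖ * ‖(s.map (fun r => -1 - r)).prod‖ <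
        ‖1 - r‖ * ‖(s.map (fun r => 1 - r)).prod‖ := by
      calc _ ≤ ‖-1 - r‖ * ‖(s.map (fun r => 1 - r)).prod‖ := by gcongr
        _ < _ := by gcongr
    simp only [Multiset.map_cons, Multiset.prod_cons, norm_mul]
    exact ⟨mul_pos hpos h1, hst.le, fun _ => hst⟩

lemma poly_norm_lt (p : Polynomial ℂ) (hp : ∀ u : ℂ, 0 ≤ u.re → p.eval u ≠ 0)
    (hd : 0 < p.natDegree) : ‖p.eval (-1)‖ < ‖p.eval 1‖ := by
  have hs : p.Splits := IsAlgClosed.splits p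
  have hp0 : p ≠ 0 := by rintro rfl; simp at hd
  rw [hs.eval_eq_prod_roots, hs.eval_eq_prod_roots, norm_mul, norm_mul]
  have := (multiset_norm_lt p.roots (fun r hr => by
    by_contra h
    exact hp r (not_lt.1 h) ((Polynomial.mem_roots hp0).1 hr))).2.2 (by
      intro h
      have h2 := hs.natDegree_eq_card_roots
      rw [h] at h2
      simp at h2
      omega)
  have hl : 0 < ‖p.leadingCoeff‖ := by simpa using hp0
  exact mul_lt_mul_of_pos_left this hl

lemma genf_even_ne_zero {n : ℕ} (L : Matrix (Fin n) (Fin n) ℝ) (hL : SPD L)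
    (S U : Finset (Fin n)) (hU : U.Nonempty)
    (z : Fin n → ℂ) (hz : ∀ x ∈ U, 0 < (z x).re) :
    genf L S U z + genf L S U (fun x => - z x) ≠ 0 := by
  classical
  set f : Fin n → Polynomial ℂ := fun x =>
    Polynomial.C ((z x).re : ℂ) * Polynomial.X + Polynomial.C ((z x).im * Complex.I) with hf
  set p : Polynomial ℂ := ∑ V ∈ U.powerset,
    Polynomial.C (pminor L (symmDiff S V) : ℂ) * ∏ x ∈ V, f x with hp
  have heval : ∀ u : ℂ, p.eval u =
      genf L S U (fun x => (z x).re * u + (z x).im * Complex.I) := by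
    intro u
    simp [hp, hf, genf, Polynomial.eval_finsetSum, Polynomial.eval_prod]
  have hfd : ∀ x, (f x).natDegree ≤ 1 := fun x => Polynomial.natDegree_linear_le
  have hne : ∀ u : ℂ, 0 ≤ u.re → p.eval u ≠ 0 := by
    intro u hu
    rw [heval]
    apply genf_ne_zero L hL
    intro x hx
    simp
    exact mul_nonneg (hz x hx).le hu
  have hcoef : p.coeff U.card = (pminor L (symmDiff S U) : ℂ) * ∏ x ∈ U, ((z x).re : ℂ) := by
    rw [hp, Polynomial.finsetSum_coeff, Finset.sum_eq_single U]
    · rw [Polynomial.coeff_C_mul]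
      congr 1
      have := Polynomial.coeff_prod_of_natDegree_le (s := U) f 1 (fun x _ => hfd x)
      rw [mul_one] at this
      rw [this]
      refine Finset.prod_congr rfl fun x _ => ?_
      simp [hf, Polynomial.coeff_C]
    · intro V hV hVU
      rw [Polynomial.coeff_C_mul, Polynomial.coeff_eq_zero_of_natDegree_lt, mul_zero]
      have hlt : V.card < U.card := Finset.card_lt_card
        (lt_of_le_of_ne (Finset.mem_powerset.1 hV) hVU)
      refine lt_of_le_of_lt (Polynomial.natDegree_prod_le _ _) (lt_of_le_of_lt ?_ hlt)
      calc _ ≤ ∑ x ∈ V, 1 := Finset.sum_le_sum fun x _ => hfd x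
        _ = V.card := by simp
    · simp
  have hdeg : 0 < p.natDegree := by
    have : U.card ≤ p.natDegree := by
      apply Polynomial.le_natDegree_of_ne_zero
      rw [hcoef]
      refine mul_ne_zero (by exact_mod_cast (pminor_pos L hL _).ne') ?_
      rw [Finset.prod_ne_zero_iff]
      intro x hx
      exact_mod_cast (hz x hx).ne'
    exact lt_of_lt_of_le hU.card_pos this
  have hlt := poly_norm_lt p hne hdeg
  have h1 : p.eval 1 = genf L S U z := by
    rw [heval]
    congr 1
    funext x
    simp [Complex.re_add_im]
  have h2 : p.eval (-1) = (starRingEnd ℂ) (genf L S U (fun x => - z x)) := by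
    rw [heval]
    simp only [genf, map_sum, map_mul, map_prod, Complex.conj_ofReal]
    refine Finset.sum_congr rfl fun V _ => ?_
    congr 1
    refine Finset.prod_congr rfl fun x _ => ?_
    apply Complex.ext <;> simp
  rw [h1, h2, RCLike.norm_conj] at hlt
  intro h0
  rw [eq_neg_of_add_eq_zero_left h0, norm_neg] at hlt
  exact lt_irrefl _ hlt

lemma multiset_root_bound (s : Multiset ℂ) (hs : ∀ r ∈ s, r = -(‖r‖ : ℂ)) :
    ‖s.sum‖ = (s.map norm).sum ∧ ‖s.prod‖ ≤ (s.map norm).sum ^ (Multiset.card s) := by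
  have h1 : s.sum = -(((s.map norm).sum : ℝ) : ℂ) ∧ 0 ≤ (s.map norm).sum ∧
      ‖s.prod‖ ≤ (s.map norm).sum ^ (Multiset.card s) := by
    induction s using Multiset.induction_on with
    | empty => simp
    | cons r s ih =>
      obtain ⟨h1, h2, h3⟩ := ih (fun q hq => hs q (Multiset.mem_cons_of_mem hq))
      have hr := hs r (Multiset.mem_cons_self r s)
      refine ⟨?_, ?_, ?_⟩
      · simp only [Multiset.sum_cons, Multiset.map_cons, h1]
        nth_rw 1 [hr]
        push_cast
        ring
      · simp only [Multiset.sum_cons, Multiset.map_cons]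
        positivity
      · simp only [Multiset.sum_cons, Multiset.map_cons, Multiset.prod_cons, Multiset.card_cons,
          norm_mul]
        rw [pow_succ']
        have hn := norm_nonneg r
        have : (s.map norm).sum ^ (Multiset.card s) ≤
          (‖r‖ + (s.map norm).sum) ^ (Multiset.card s) := by gcongr; linarith
        apply mul_le_mul (by linarith) (h3.trans this) (norm_nonneg _) (by linarith)
  refine ⟨?_, h1.2.2⟩
  rw [h1.1, norm_neg, Complex.norm_real, Real.norm_of_nonneg h1.2.1]

lemma poly_root_bound (p : Polynomial ℂ) (hp : p ≠ 0)
    (hr : ∀ r : ℂ, p.eval r = 0 → r = -(‖r‖ : ℂ)) :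
    ‖p.coeff 0‖ ≤ ‖p.leadingCoeff‖ * (‖p.nextCoeff‖ / ‖p.leadingCoeff‖) ^ p.natDegree := by
  have hs : p.Splits := IsAlgClosed.splits p
  have hl : 0 < ‖p.leadingCoeff‖ := by simpa using hp
  obtain ⟨h1, h2⟩ := multiset_root_bound p.roots
    (fun r h => hr r ((Polynomial.mem_roots hp).1 h))
  rw [hs.coeff_zero_eq_leadingCoeff_mul_prod_roots, hs.nextCoeff_eq_neg_sum_roots_mul_leadingCoeff,
    hs.natDegree_eq_card_roots]
  simp only [norm_mul, norm_neg, norm_pow, norm_one, one_pow, one_mul]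
  rw [h1, mul_div_cancel_left₀ _ hl.ne']
  gcongr

lemma sum_even_range (f : ℕ → ℂ) (d : ℕ) : ∑ j ∈ Finset.range (2 * d + 1), f j * (1 + (-1) ^ j) =
    2 * ∑ m ∈ Finset.range (d + 1), f (2 * m) := by
  induction d with
  | zero => simp; ring
  | succ d ih =>
    rw [show 2 * (d + 1) + 1 = 2 * d + 1 + 1 + 1 by ring, Finset.sum_range_succ,
      Finset.sum_range_succ, ih, Finset.sum_range_succ _ (d + 1)]
    have h1 : (-1 : ℂ) ^ (2 * d + 1) = -1 := by rw [pow_succ, pow_mul]; simp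
    have h2 : (-1 : ℂ) ^ (2 * d + 1 + 1) = 1 := by rw [pow_succ, h1]; simp
    rw [h1, h2, show 2 * (d + 1) = 2 * d + 1 + 1 by ring]
    ring

/-- Coefficients. -/
noncomputable def ecoef {n : ℕ} (L : Matrix (Fin n) (Fin n) ℝ) (T U : Finset (Fin n))
    (τ : Fin n → ℝ) (j : ℕ) : ℝ :=
  ∑ V ∈ U.powersetCard j, pminor L (symmDiff T V) * ∏ x ∈ V, τ x

lemma ecoef_pos {n : ℕ} (L : Matrix (Fin n) (Fin n) ℝ) (hL : SPD L) (T U : Finset (Fin n))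
    (τ : Fin n → ℝ) (hτ : ∀ x, 0 < τ x) (j : ℕ) (hj : j ≤ U.card) : 0 < ecoef L T U τ j := by
  unfold ecoef
  apply Finset.sum_pos
  · intro V _
    exact mul_pos (pminor_pos L hL _) (Finset.prod_pos fun x _ => hτ x)
  · exact Finset.powersetCard_nonempty.2 hj

lemma ecoef_bound {n : ℕ} (L : Matrix (Fin n) (Fin n) ℝ) (hL : SPD L) (T U : Finset (Fin n))
    (τ : Fin n → ℝ) (hτ : ∀ x, 0 < τ x) (d : ℕ) (hd : 0 < d) (hU : U.card = 2 * d) :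
    ecoef L T U τ 0 ≤ ecoef L T U τ (2 * d) *
      (ecoef L T U τ (2 * (d - 1)) / ecoef L T U τ (2 * d)) ^ d := by
  set e := ecoef L T U τ with he
  have hpos : ∀ m, m ≤ d → 0 < e (2 * m) := fun m hm =>
    ecoef_pos L hL T U τ hτ _ (by omega)
  set p : Polynomial ℂ := ∑ m ∈ Finset.range (d + 1),
    Polynomial.C (e (2 * m) : ℂ) * Polynomial.X ^ m with hp
  have hcoef : ∀ m, m ≤ d → p.coeff m = (e (2 * m) : ℂ) := by
    intro m hm
    rw [hp, Polynomial.finsetSum_coeff, Finset.sum_eq_single m]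
    · simp
    · intro b _ hb
      rw [Polynomial.coeff_C_mul_X_pow, if_neg (Ne.symm hb)]
    · intro h
      simp at h
      omega
  have hdeg : p.natDegree = d := by
    apply le_antisymm
    · apply Polynomial.natDegree_sum_le_of_forall_le
      intro m hm
      refine (Polynomial.natDegree_C_mul_X_pow_le _ _).trans ?_
      simp at hm
      omega
    · apply Polynomial.le_natDegree_of_ne_zero
      rw [hcoef d le_rfl]
      exact_mod_cast (hpos d le_rfl).ne'
  have hp0 : p ≠ 0 := by
    intro h
    rw [h] at hdeg
    simp at hdeg
    omega
  have hgen : ∀ t : ℂ, genf L T U (fun x => t * τ x) + genf L T U (fun x => -(t * τ x)) =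
      2 * p.eval (t ^ 2) := by
    intro t
    have h1 : genf L T U (fun x => t * τ x) + genf L T U (fun x => -(t * τ x)) =
        ∑ j ∈ Finset.range (2 * d + 1), ((e j : ℂ) * t ^ j) * (1 + (-1) ^ j) := by
      unfold genf
      rw [← Finset.sum_add_distrib, Finset.sum_powerset, hU]
      refine Finset.sum_congr rfl fun j _ => ?_
      rw [he]
      unfold ecoef
      push_cast
      rw [Finset.sum_mul, Finset.sum_mul]
      refine Finset.sum_congr rfl fun V hV => ?_
      have hc := (Finset.mem_powersetCard.1 hV).2
      have a1 : ∏ x ∈ V, -(t * (τ x : ℂ)) = (-1) ^ j * (t ^ j * ∏ x ∈ V, (τ x : ℂ)) := by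
        rw [Finset.prod_neg, Finset.prod_mul_distrib, Finset.prod_const, hc]
      rw [a1, Finset.prod_mul_distrib, Finset.prod_const, hc]
      ring
    rw [h1, sum_even_range (fun j => (e j : ℂ) * t ^ j)]
    congr 1
    rw [hp, Polynomial.eval_finsetSum]
    refine Finset.sum_congr rfl fun m _ => ?_
    simp [pow_mul]
  have hroots : ∀ r : ℂ, p.eval r = 0 → r = -(‖r‖ : ℂ) := by
    intro r hr
    obtain ⟨t, ht⟩ := IsAlgClosed.exists_pow_nat_eq r (n := 2) (by norm_num)
    have hcase : ∀ t : ℂ, t ^ 2 = r → ¬ 0 < t.re := by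
      intro t ht hre
      have := genf_even_ne_zero L hL T U (Finset.card_pos.1 (by omega)) (fun x => t * τ x)
        (fun x _ => by simpa using mul_pos hre (hτ x))
      rw [hgen, ht, hr] at this
      simp at this
    have h1 := hcase t ht
    have h2 := hcase (-t) (by rw [neg_sq, ht])
    have h3 : t.re = 0 := by
      simp at h1 h2
      linarith
    have h4 : t = t.im * Complex.I := by
      apply Complex.ext <;> simp [h3]
    have h5 : r = -((t.im ^ 2 : ℝ) : ℂ) := by
      rw [← ht, h4, mul_pow, Complex.I_sq]
      simp
    rw [h5, norm_neg, Complex.norm_real, Real.norm_of_nonneg (sq_nonneg _)]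
  have hb := poly_root_bound p hp0 hroots
  rw [Polynomial.nextCoeff_of_natDegree_pos (by omega), Polynomial.leadingCoeff, hdeg,
    hcoef 0 (by omega), hcoef d le_rfl, hcoef (d - 1) (by omega), Complex.norm_real,
    Complex.norm_real, Complex.norm_real, Real.norm_of_nonneg (hpos _ (by omega)).le,
    Real.norm_of_nonneg (hpos _ (by omega)).le, Real.norm_of_nonneg (hpos _ (by omega)).le] at hb
  simpa using hb

lemma genf_four {n : ℕ} (L : Matrix (Fin n) (Fin n) ℝ) (S : Finset (Fin n)) (a b c d : Fin n)
    (hab : a ≠ b) (hac : a ≠ c) (had : a ≠ d) (hbc : b ≠ c) (hbd : b ≠ d) (hcd : c ≠ d)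
    (z : Fin n → ℂ) (w : Finset (Fin n) → ℝ) (hw : ∀ V, w V = pminor L (symmDiff S V)) :
    genf L S {a, b, c, d} z + genf L S {a, b, c, d} (fun x => - z x) =
    2 * ((w ∅ : ℂ) + w {a, b} * (z a * z b) + w {c, d} * (z c * z d) +
      (w {a, c} * (z a * z c) + w {a, d} * (z a * z d) + w {b, c} * (z b * z c)
        + w {b, d} * (z b * z d)) + w {a, b, c, d} * (z a * z b * (z c * z d))) := by
  unfold genf
  simp only [← hw]
  have e0 : ({d} : Finset (Fin n)) = insert d ∅ := rfl
  have e : ∀ f : Finset (Fin n) → ℂ, ∑ V ∈ ({a, b, c, d} : Finset (Fin n)).powerset, f V =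
      f ∅ + f {d} + (f {c} + f {c, d}) + (f {b} + f {b, d} + (f {b, c} + f {b, c, d})) +
      (f {a} + f {a, d} + (f {a, c} + f {a, c, d}) +
      (f {a, b} + f {a, b, d} + (f {a, b, c} + f {a, b, c, d}))) := by
    have e1 : ∀ f : Finset (Fin n) → ℂ, ∑ V ∈ ({d} : Finset (Fin n)).powerset, f V =
        f ∅ + f {d} := by
      intro f
      rw [e0, Finset.sum_powerset_insert (by simp)]
      simp
    have e2 : ∀ f : Finset (Fin n) → ℂ, ∑ V ∈ ({c, d} : Finset (Fin n)).powerset, f V =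
        f ∅ + f {d} + (f {c} + f {c, d}) := by
      intro f
      rw [Finset.sum_powerset_insert (by simp [hcd]), e1, e1]
      rfl
    have e3 : ∀ f : Finset (Fin n) → ℂ, ∑ V ∈ ({b, c, d} : Finset (Fin n)).powerset, f V =
        f ∅ + f {d} + (f {c} + f {c, d}) + (f {b} + f {b, d} + (f {b, c} + f {b, c, d})) := by
      intro f
      rw [Finset.sum_powerset_insert (by simp [hbc, hbd]), e2, e2]
      rfl
    intro f
    rw [Finset.sum_powerset_insert (by simp [hab, hac, had]), e3, e3]
    rfl
  rw [e, e]
  simp [hab, hac, had, hbc, hbd, hcd]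
  ring

set_option maxHeartbeats 1000000 in
lemma four_bound {n : ℕ} (L : Matrix (Fin n) (Fin n) ℝ) (hL : SPD L)
    (S : Finset (Fin n)) (a b c d : Fin n)
    (hab : a ≠ b) (hac : a ≠ c) (had : a ≠ d) (hbc : b ≠ c) (hbd : b ≠ d) (hcd : c ≠ d)
    (w : Finset (Fin n) → ℝ) (hw : ∀ V, w V = pminor L (symmDiff S V)) :
    √(w {a, b} * w {c, d}) ≤ (w {a, c} + w {a, d} + w {b, c} + w {b, d}) / 2 +
      √(w {a, b, c, d} * w ∅) := by
  have hpos : ∀ V, 0 < w V := fun V => by rw [hw]; exact pminor_pos L hL _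
  set A := w {a, b}
  set B := w {c, d}
  set e := w {a, c} + w {a, d} + w {b, c} + w {b, d} with he
  set m := w {a, b, c, d}
  set C := w ∅
  have hA : 0 < A := hpos _
  have hB : 0 < B := hpos _
  have hm : 0 < m := hpos _
  have hC : 0 < C := hpos _
  have hepos : 0 < e := by
    have h1 := hpos {a, c}
    have h2 := hpos {a, d}
    have h3 := hpos {b, c}
    have h4 := hpos {b, d}
    linarith
  by_contra hcon
  rw [not_le] at hcon
  set κ := √(A * B) with hκ
  set ρ := √(m * C) with hρ
  have hκpos : 0 < κ := Real.sqrt_pos.2 (mul_pos hA hB)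
  have hρpos : 0 < ρ := Real.sqrt_pos.2 (mul_pos hm hC)
  have hκsq : κ ^ 2 = A * B := Real.sq_sqrt (mul_pos hA hB).le
  have hρsq : ρ ^ 2 = m * C := Real.sq_sqrt (mul_pos hm hC).le
  set v := ρ / m with hv
  have hvpos : 0 < v := div_pos hρpos hm
  have hmv : m * v = ρ := by rw [hv]; field_simp
  have hρv : ρ * v = C := by
    rw [hv]; field_simp; linarith
  set X := √(v * κ / A) with hX
  set Y := √(v * κ / B) with hY
  have hXpos : 0 < X := Real.sqrt_pos.2 (by positivity)
  have hYpos : 0 < Y := Real.sqrt_pos.2 (by positivity)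
  have hX2 : A * X ^ 2 = v * κ := by
    rw [hX, Real.sq_sqrt (by positivity)]; field_simp
  have hY2 : B * Y ^ 2 = v * κ := by
    rw [hY, Real.sq_sqrt (by positivity)]; field_simp
  have hXY : X * Y = v := by
    have : (X * Y) ^ 2 = v ^ 2 := by
      have h1 : (A * X ^ 2) * (B * Y ^ 2) = v ^ 2 * (A * B) := by
        rw [hX2, hY2, ← hκsq]; ring
      have h2 : A * B ≠ 0 := by positivity
      apply mul_left_cancel₀ h2
      linarith
    exact (pow_left_inj₀ (by positivity) hvpos.le (by norm_num)).1 this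
  set t := (e + 2 * ρ) / (2 * κ) with ht
  have ht0 : 0 < t := by positivity
  have ht1 : t < 1 := by
    rw [ht, div_lt_one (by positivity)]; linarith
  have htκ : 2 * (κ * t) = e + 2 * ρ := by
    rw [ht]; field_simp
  set r := √((1 - t) / 2) with hr
  set s := √((1 + t) / 2) with hs
  have hrpos : 0 < r := Real.sqrt_pos.2 (by linarith)
  have hr2 : r ^ 2 = (1 - t) / 2 := Real.sq_sqrt (by linarith)
  have hs2 : s ^ 2 = (1 + t) / 2 := Real.sq_sqrt (by linarith)
  set ω : ℂ := ⟨r, s⟩ with hω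
  set ω' : ℂ := ⟨r, -s⟩ with hω'
  have h1 : ω * ω' = 1 := by
    apply Complex.ext
    · simp [hω, hω']; linarith [hr2, hs2, pow_two r, pow_two s]
    · simp [hω, hω']; ring
  have h2 : ω ^ 2 + ω' ^ 2 = ((-2 * t : ℝ) : ℂ) := by
    apply Complex.ext
    · simp [hω, hω', pow_two]; linarith [hr2, hs2, pow_two r, pow_two s]
    · simp [hω, hω', pow_two]; ring
  set z : Fin n → ℂ := fun x => if x = a ∨ x = b then X * ω else Y * ω' with hz
  have hne := genf_even_ne_zero L hL S {a, b, c, d} (by simp) z (by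
    intro x _
    by_cases hx : x = a ∨ x = b
    · simp only [hz, hx, if_true]
      simpa [hω] using mul_pos hXpos hrpos
    · simp only [hz, hx, if_false]
      simpa [hω'] using mul_pos hYpos hrpos)
  rw [genf_four L S a b c d hab hac had hbc hbd hcd z w hw] at hne
  have za : z a = X * ω := by simp [hz]
  have zb : z b = X * ω := by simp [hz]
  have zc : z c = Y * ω' := by simp [hz, hac.symm, hbc.symm]
  have zd : z d = Y * ω' := by simp [hz, had.symm, hbd.symm]
  apply hne
  rw [za, zb, zc, zd]
  have cX2 : (A : ℂ) * X ^ 2 = v * κ := by exact_mod_cast hX2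
  have cY2 : (B : ℂ) * Y ^ 2 = v * κ := by exact_mod_cast hY2
  have cXY : (X : ℂ) * Y = v := by exact_mod_cast hXY
  have ce : (e : ℂ) = w {a, c} + w {a, d} + w {b, c} + w {b, d} := by
    rw [he]; push_cast; ring
  have fin : (C : ℂ) - 2 * v * κ * t + e * v + m * v ^ 2 = 0 := by
    have : C - 2 * v * κ * t + e * v + m * v ^ 2 = 0 := by
      have k1 : 2 * v * κ * t = v * (e + 2 * ρ) := by rw [← htκ]; ring
      have k2 : m * v ^ 2 = ρ * v := by rw [← hmv]; ring
      rw [k1, k2]; linarith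
    exact_mod_cast this
  have p1 : (X : ℂ) * ω * (Y * ω') = v := by
    rw [← cXY]; linear_combination (X * Y : ℂ) * h1
  have p2 : (A : ℂ) * (X * ω * (X * ω)) + B * (Y * ω' * (Y * ω')) = -2 * v * κ * t := by
    push_cast at h2
    linear_combination ω ^ 2 * cX2 + ω' ^ 2 * cY2 + (v * κ : ℂ) * h2
  have p3 : (X : ℂ) * ω * (X * ω) * (Y * ω' * (Y * ω')) = v ^ 2 := by
    rw [← p1]; ring
  rw [p1, p3]
  linear_combination 2 * p2 + 2 * fin - 2 * (v : ℂ) * ce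

lemma main_pd_large {n : ℕ} (L : Matrix (Fin n) (Fin n) ℝ) (hL : SPD L) (k d : ℕ)
    (S T : Finset (Fin n)) (hS : S.card = k) (hT : T.card = k) (K : ℝ) (hK : 1 ≤ K)
    (hd : (S \ T).card = d) (hd2 : 2 ≤ d)
    (hloc : ∀ W : Finset (Fin n), W.card = k → (S \ W).card ≤ 2 → pminor L W ≤ K * pminor L S) :
    pminor L T ≤ pminor L S * (((2 * d).choose (2 * (d - 1)) : ℝ) * (3 * K)) ^ d := by
  classical
  set s0 := pminor L S with hs0
  have hs0pos : 0 < s0 := pminor_pos L hL S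
  set I := S \ T with hI
  set J := T \ S with hJ
  have hdJ : J.card = d := by
    have h1 : I.card + (S ∩ T).card = S.card := Finset.card_sdiff_add_card_inter S T
    have h2 : J.card + (S ∩ T).card = T.card := by
      rw [Finset.inter_comm]; exact Finset.card_sdiff_add_card_inter T S
    omega
  set U := symmDiff S T with hU
  have hUIJ : U = I ∪ J := rfl
  have hdisj : Disjoint I J := disjoint_sdiff_sdiff
  have hUcard : U.card = 2 * d := by
    rw [hUIJ, Finset.card_union_of_disjoint hdisj, hd, hdJ]; ring
  obtain ⟨w, hw⟩ : ∃ w : Finset (Fin n) → ℝ, ∀ V, w V = pminor L (symmDiff S V) :=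
    ⟨_, fun _ => rfl⟩
  have hwpos : ∀ V, 0 < w V := fun V => by rw [hw]; exact pminor_pos L hL _
  -- bound for balanced sets
  have hbal : ∀ V : Finset (Fin n), (S ∩ V).card = (V \ S).card → (S ∩ V).card ≤ 2 →
      w V ≤ K * s0 := by
    intro V h1 h2
    rw [hw]
    apply hloc
    · have e : symmDiff S V = (S \ V) ∪ (V \ S) := rfl
      rw [e, Finset.card_union_of_disjoint disjoint_sdiff_sdiff, ← h1,
        Finset.card_sdiff_add_card_inter, hS]
    · have e : S \ symmDiff S V = S ∩ V := by
        ext x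
        simp only [Finset.mem_sdiff, Finset.mem_symmDiff, Finset.mem_inter]
        tauto
      rw [e]; exact h2
  have hIS : ∀ x ∈ I, x ∈ S := fun x hx => (Finset.mem_sdiff.1 hx).1
  have hJS : ∀ x ∈ J, x ∉ S := fun x hx => (Finset.mem_sdiff.1 hx).2
  have hIJne : ∀ x ∈ I, ∀ y ∈ J, x ≠ y := by
    rintro x hx y hy rfl
    exact hJS _ hy (hIS _ hx)
  have hpair : ∀ x ∈ I, ∀ y ∈ J, w {x, y} ≤ K * s0 := by
    intro x hx y hy
    have e1 : S ∩ {x, y} = {x} := by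
      rw [Finset.inter_insert_of_mem (hIS x hx), Finset.inter_singleton_of_notMem (hJS y hy)]
      rfl
    have e2 : ({x, y} : Finset (Fin n)) \ S = {y} := by
      rw [Finset.insert_sdiff_of_mem _ (hIS x hx), Finset.sdiff_eq_self_of_disjoint]
      simpa using hJS y hy
    apply hbal <;> simp [e1, e2]
  have hquad : ∀ x ∈ I, ∀ x' ∈ I, ∀ y ∈ J, ∀ y' ∈ J, x ≠ x' → y ≠ y' →
      w {x, x', y, y'} ≤ K * s0 := by
    intro x hx x' hx' y hy y' hy' hne hne'
    have e1 : S ∩ {x, x', y, y'} = {x, x'} := by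
      rw [Finset.inter_insert_of_mem (hIS x hx), Finset.inter_insert_of_mem (hIS x' hx'),
        Finset.inter_insert_of_notMem (hJS y hy), Finset.inter_singleton_of_notMem (hJS y' hy')]
      rfl
    have e2 : ({x, x', y, y'} : Finset (Fin n)) \ S = {y, y'} := by
      rw [Finset.insert_sdiff_of_mem _ (hIS x hx), Finset.insert_sdiff_of_mem _ (hIS x' hx'),
        Finset.sdiff_eq_self_of_disjoint]
      rw [Finset.disjoint_left]
      intro q hq
      simp only [Finset.mem_insert, Finset.mem_singleton] at hq
      rcases hq with rfl | rfl
      · exact hJS _ hy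
      · exact hJS _ hy'
    apply hbal <;> rw [e1]
    · rw [e2, Finset.card_pair hne, Finset.card_pair hne']
    · exact Finset.card_le_two
  have hIne : I.offDiag.Nonempty := by
    rw [← Finset.card_pos, Finset.offDiag_card, hd]
    have : d * 2 ≤ d * d := Nat.mul_le_mul_left d hd2
    omega
  have hJne : J.offDiag.Nonempty := by
    rw [← Finset.card_pos, Finset.offDiag_card, hdJ]
    have : d * 2 ≤ d * d := Nat.mul_le_mul_left d hd2
    omega
  obtain ⟨⟨a, b⟩, hab, hmaxI⟩ := Finset.exists_max_image I.offDiag (fun p => w {p.1, p.2}) hIne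
  obtain ⟨⟨c, e⟩, hce, hmaxJ⟩ := Finset.exists_max_image J.offDiag (fun p => w {p.1, p.2}) hJne
  rw [Finset.mem_offDiag] at hab hce
  simp only at hab hce hmaxI hmaxJ
  obtain ⟨ha, hb, hab⟩ := hab
  obtain ⟨hc, he, hce⟩ := hce
  have hfour := four_bound L hL S a b c e hab (hIJne a ha c hc) (hIJne a ha e he)
    (hIJne b hb c hc) (hIJne b hb e he) hce w hw
  set A := w {a, b} with hA
  set B := w {c, e} with hB
  have hApos : 0 < A := hwpos _
  have hBpos : 0 < B := hwpos _
  set κ := √(A * B) with hκ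
  have hκpos : 0 < κ := Real.sqrt_pos.2 (mul_pos hApos hBpos)
  have hκsq : κ ^ 2 = A * B := Real.sq_sqrt (mul_pos hApos hBpos).le
  have hw0 : w ∅ = s0 := by rw [hw, hs0, ← Finset.bot_eq_empty, symmDiff_bot]
  have hκle : κ ≤ 3 * (K * s0) := by
    have h1 := hpair a ha c hc
    have h2 := hpair a ha e he
    have h3 := hpair b hb c hc
    have h4 := hpair b hb e he
    have h5 := hquad a ha b hb c hc e he hab hce
    have hKs : s0 ≤ K * s0 := by nlinarith
    have h6 : √(w {a, b, c, e} * w ∅) ≤ K * s0 := by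
      apply Real.sqrt_le_iff.2
      refine ⟨by positivity, ?_⟩
      rw [hw0, pow_two]
      exact mul_le_mul h5 hKs hs0pos.le (by positivity)
    linarith
  set t := √(A / κ) with ht
  have htpos : 0 < t := Real.sqrt_pos.2 (by positivity)
  have htsq : t * t = A / κ := Real.mul_self_sqrt (by positivity)
  set τ : Fin n → ℝ := fun x => if x ∈ I then t else t⁻¹ with hτ
  have hτpos : ∀ x, 0 < τ x := by
    intro x
    by_cases hx : x ∈ I <;> simp [hτ, hx, htpos]
  have hτI : ∀ x ∈ I, τ x = t := fun x hx => by simp [hτ, hx]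
  have hτJ : ∀ x ∈ J, τ x = t⁻¹ := fun x hx => by
    have : x ∉ I := fun h => hIJne x h x hx rfl
    simp [hτ, this]
  have hτU : ∏ x ∈ U, τ x = 1 := by
    rw [hUIJ, Finset.prod_union hdisj, Finset.prod_congr rfl hτI, Finset.prod_congr rfl hτJ,
      Finset.prod_const, Finset.prod_const, hd, hdJ, ← mul_pow, mul_inv_cancel₀ htpos.ne', one_pow]
  have hTU : symmDiff T U = S := by
    rw [hU, symmDiff_comm S T, symmDiff_symmDiff_cancel_left]
  have hb := ecoef_bound L hL T U τ hτpos d (by omega) hUcard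
  have c0 : ecoef L T U τ 0 = pminor L T := by
    simp [ecoef]
    rw [← Finset.bot_eq_empty, symmDiff_bot]
  have c2 : ecoef L T U τ (2 * d) = s0 := by
    rw [← hUcard, ecoef, Finset.powersetCard_self, Finset.sum_singleton, hτU, hTU, mul_one]
  have c1 : ecoef L T U τ (2 * (d - 1)) ≤
      ((2 * d).choose (2 * (d - 1)) : ℝ) * (3 * (K * s0)) := by
    unfold ecoef
    have hbd : ∀ V ∈ U.powersetCard (2 * (d - 1)),
        pminor L (symmDiff T V) * ∏ x ∈ V, τ x ≤ 3 * (K * s0) := by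
      intro V hV
      obtain ⟨hVU, hVc⟩ := Finset.mem_powersetCard.1 hV
      have hc2 : (U \ V).card = 2 := by
        rw [Finset.card_sdiff_of_subset hVU]; omega
      obtain ⟨x, y, hxy, hUV⟩ := Finset.card_eq_two.1 hc2
      have hs : symmDiff T V = symmDiff S {x, y} := by
        rw [← hUV, ← symmDiff_of_ge hVU, ← symmDiff_assoc, ← hTU, symmDiff_assoc T U U,
          symmDiff_self]
        simp
        rw [← Finset.bot_eq_empty, symmDiff_bot]
      have hprod : (∏ x ∈ V, τ x) * (τ x * τ y) = 1 := by
        have := Finset.prod_sdiff hVU (f := τ)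
        rw [hUV, Finset.prod_pair hxy, hτU] at this
        linarith
      have hτxy : ∏ x ∈ V, τ x = (τ x * τ y)⁻¹ := eq_inv_of_mul_eq_one_left hprod
      rw [hs, ← hw, hτxy]
      have hxU : x ∈ I ∪ J := by
        have : x ∈ U \ V := by rw [hUV]; simp
        exact (Finset.mem_sdiff.1 this).1
      have hyU : y ∈ I ∪ J := by
        have : y ∈ U \ V := by rw [hUV]; simp
        exact (Finset.mem_sdiff.1 this).1
      have hKs : 0 < K * s0 := by positivity
      rcases Finset.mem_union.1 hxU with hx | hx <;> rcases Finset.mem_union.1 hyU with hy | hy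
      · rw [hτI x hx, hτI y hy, htsq]
        have hm : w {x, y} ≤ A := hmaxI (x, y) (by rw [Finset.mem_offDiag]; exact ⟨hx, hy, hxy⟩)
        calc w {x, y} * (A / κ)⁻¹ ≤ A * (A / κ)⁻¹ := by gcongr
          _ = κ := by field_simp
          _ ≤ _ := hκle
      · rw [hτI x hx, hτJ y hy, mul_inv_cancel₀ htpos.ne', inv_one, mul_one]
        have := hpair x hx y hy
        linarith
      · rw [hτJ x hx, hτI y hy, inv_mul_cancel₀ htpos.ne', inv_one, mul_one, Finset.pair_comm]
        have := hpair y hy x hx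
        linarith
      · rw [hτJ x hx, hτJ y hy, ← mul_inv, inv_inv, htsq]
        have hm : w {x, y} ≤ B := hmaxJ (x, y) (by rw [Finset.mem_offDiag]; exact ⟨hx, hy, hxy⟩)
        calc w {x, y} * (A / κ) ≤ B * (A / κ) := by gcongr
          _ = κ := by field_simp; linarith
          _ ≤ _ := hκle
    refine (Finset.sum_le_card_nsmul _ _ _ hbd).trans ?_
    rw [Finset.card_powersetCard, hUcard, nsmul_eq_mul]
  rw [c0, c2] at hb
  refine hb.trans ?_
  have hnn : 0 < ecoef L T U τ (2 * (d - 1)) := ecoef_pos L hL T U τ hτpos _ (by omega)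
  gcongr
  rw [div_le_iff₀ hs0pos]
  linarith

lemma main_pd {n : ℕ} (L : Matrix (Fin n) (Fin n) ℝ) (hL : SPD L) (k : ℕ) (hk : 1 ≤ k)
    (S T : Finset (Fin n)) (hS : S.card = k) (hT : T.card = k) (K : ℝ) (hK : 1 ≤ K)
    (hloc : ∀ W : Finset (Fin n), W.card = k → (S \ W).card ≤ 2 → pminor L W ≤ K * pminor L S) :
    pminor L T ≤ ((k : ℝ) ^ 4 * K) ^ k * pminor L S := by
  have hs0pos : 0 < pminor L S := pminor_pos L hL S
  have hk1 : (1 : ℝ) ≤ k := by exact_mod_cast hk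
  have hk4 : (1 : ℝ) ≤ (k : ℝ) ^ 4 := one_le_pow₀ hk1
  have hbase : K ≤ (k : ℝ) ^ 4 * K := by nlinarith
  by_cases hd : (S \ T).card ≤ 2
  · refine (hloc T hT hd).trans ?_
    gcongr
    refine hbase.trans ?_
    exact le_self_pow₀ (hK.trans hbase) (by omega)
  · push Not at hd
    obtain ⟨d, hdd⟩ : ∃ d, (S \ T).card = d := ⟨_, rfl⟩
    rw [hdd] at hd
    have hdk : d ≤ k := by rw [← hdd, ← hS]; exact Finset.card_le_card Finset.sdiff_subset
    refine (main_pd_large L hL k d S T hS hT K hK hdd (by omega) hloc).trans ?_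
    rw [mul_comm]
    gcongr
    have hch : (2 * d).choose (2 * (d - 1)) = d * (2 * d - 1) := by
      rw [← Nat.choose_symm (by omega), show 2 * d - 2 * (d - 1) = 2 by omega,
        Nat.choose_two_right, Nat.mul_assoc, Nat.mul_div_cancel_left _ (by norm_num)]
    have hnat : (2 * d).choose (2 * (d - 1)) * 3 ≤ k ^ 4 := by
      rw [hch]
      have h1 : d * (2 * d - 1) * 3 ≤ d ^ 4 := by
        have h2 : d * (2 * d - 1) ≤ d * (2 * d) := Nat.mul_le_mul_left _ (by omega)
        have h3 : 9 ≤ d * d := Nat.mul_le_mul hd hd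
        have h4 : d * d * 9 ≤ d * d * (d * d) := Nat.mul_le_mul_left _ h3
        have h5 : d ^ 4 = d * d * (d * d) := by ring
        have h6 : d * (2 * d) = 2 * (d * d) := by ring
        omega
      exact h1.trans (Nat.pow_le_pow_left hdk 4)
    have hr : ((2 * d).choose (2 * (d - 1)) : ℝ) * 3 ≤ (k : ℝ) ^ 4 := by exact_mod_cast hnat
    calc (((2 * d).choose (2 * (d - 1)) : ℝ) * (3 * K)) ^ d ≤ ((k : ℝ) ^ 4 * K) ^ d := by
          rw [show ((2 * d).choose (2 * (d - 1)) : ℝ) * (3 * K) =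
            ((2 * d).choose (2 * (d - 1)) : ℝ) * 3 * K by ring]
          gcongr
      _ ≤ ((k : ℝ) ^ 4 * K) ^ k := pow_le_pow_right₀ (hK.trans hbase) hdk

lemma spd_add {n : ℕ} (L : Matrix (Fin n) (Fin n) ℝ) (hL : (L + Lᵀ).PosSemidef) (ε : ℝ)
    (hε : 0 < ε) : SPD (L + ε • (1 : Matrix (Fin n) (Fin n) ℝ)) := by
  intro v hv
  have h1 := hL.dotProduct_mulVec_nonneg v
  rw [star_trivial, Matrix.add_mulVec, dotProduct_add, Matrix.mulVec_transpose,
    dotProduct_comm v (v ᵥ* L), ← Matrix.dotProduct_mulVec] at h1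
  have h3 : 0 < v ⬝ᵥ v := by
    have h4 : 0 ≤ v ⬝ᵥ v := Finset.sum_nonneg fun i _ => mul_self_nonneg _
    exact lt_of_le_of_ne h4 (fun h => hv (dotProduct_self_eq_zero.1 h.symm))
  rw [Matrix.add_mulVec, Matrix.smul_mulVec, Matrix.one_mulVec, dotProduct_add, dotProduct_smul,
    smul_eq_mul]
  nlinarith [mul_pos hε h3]

/-- For an nPSD matrix `L` (i.e. `L + Lᵀ ⪰ 0`), any `(2,ζ)`-approximate local maximum `S`
of the principal-minor density `μ(S) = det(L_S)` on `k`-element subsets, with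
`det(L_S) > 0`, is a `(k^4/ζ)^k`-approximate global maximum. -/
theorem nPSD_local_search_guarantee
    (n k : ℕ) (hk : 1 ≤ k) (hkn : k ≤ n) (ζ : ℝ) (hζ : 0 < ζ) (hζ1 : ζ ≤ 1)
    (L : Matrix (Fin n) (Fin n) ℝ) (hL : (L + Lᵀ).PosSemidef)
    (S : Finset (Fin n)) (hS : S.card = k) (hSpos : 0 < pminor L S)
    (hloc : ∀ T : Finset (Fin n), T.card = k → (S \ T).card ≤ 2 →
      ζ * pminor L T ≤ pminor L S) :
    ∀ T : Finset (Fin n), T.card = k →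
      pminor L T ≤ ((k : ℝ) ^ 4 / ζ) ^ k * pminor L S := by
  intro T hT
  have hcont : ∀ W : Finset (Fin n), Filter.Tendsto
      (fun ε : ℝ => pminor (L + ε • (1 : Matrix (Fin n) (Fin n) ℝ)) W)
      (nhdsWithin 0 (Set.Ioi 0)) (nhds (pminor L W)) := by
    intro W
    have hc : Continuous (fun ε : ℝ => pminor (L + ε • (1 : Matrix (Fin n) (Fin n) ℝ)) W) := by
      unfold pminor
      apply Continuous.matrix_det
      apply Continuous.matrix_submatrix
      fun_prop
    have := (hc.tendsto 0).mono_left (nhdsWithin_le_nhds (s := Set.Ioi 0))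
    simpa using this
  have hζi : 1 ≤ 1 / ζ := by rw [le_div_iff₀ hζ]; linarith
  have main : ∀ K : ℝ, 1 / ζ < K → pminor L T ≤ ((k : ℝ) ^ 4 * K) ^ k * pminor L S := by
    intro K hK
    have hev : ∀ᶠ ε : ℝ in nhdsWithin 0 (Set.Ioi 0), ∀ W : Finset (Fin n), W.card = k →
        (S \ W).card ≤ 2 → pminor (L + ε • (1 : Matrix (Fin n) (Fin n) ℝ)) W ≤
          K * pminor (L + ε • (1 : Matrix (Fin n) (Fin n) ℝ)) S := by
      rw [Filter.eventually_all]
      intro W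
      by_cases hW : W.card = k ∧ (S \ W).card ≤ 2
      · have h1 : pminor L W < K * pminor L S := by
          have h2 := hloc W hW.1 hW.2
          have h3 : pminor L W ≤ 1 / ζ * pminor L S := by
            rw [one_div, ← div_eq_inv_mul, le_div_iff₀ hζ]; linarith
          exact h3.trans_lt (mul_lt_mul_of_pos_right hK hSpos)
        filter_upwards [(hcont W).eventually_lt ((hcont S).const_mul K) h1] with ε hε _ _
        exact hε.le
      · exact Filter.Eventually.of_forall fun ε h1 h2 => absurd ⟨h1, h2⟩ hW
    refine le_of_tendsto_of_tendsto (hcont T) ((hcont S).const_mul _) ?_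
    filter_upwards [hev, self_mem_nhdsWithin] with ε h1 h2
    exact main_pd _ (spd_add L hL ε h2) k hk S T hS hT K (by linarith) h1
  have hc : Continuous (fun K : ℝ => ((k : ℝ) ^ 4 * K) ^ k * pminor L S) := by fun_prop
  have ht := (hc.tendsto (1 / ζ)).mono_left (nhdsWithin_le_nhds (s := Set.Ioi (1 / ζ)))
  have := ge_of_tendsto ht (by
    filter_upwards [self_mem_nhdsWithin] with K hK
    exact main K hK)
  simpa [div_eq_mul_inv] using this
end

section
/- Let n ≥ 2 and let f(z) = Σ_{i=0}^n a_i z^i be a univariate polynomial of degree at most n with real coefficients satisfying a_i ≥ 0 for all i. If f(z) ≠ 0 for every complex number z with Re(z) > 0 (i.e., f is Hurwitz-stable), then a_n·a_0 ≤ max{ a_1·a_{n−1}, a_2·a_{n−2} }. -/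
open Polynomial in
lemma hs_factor (P : ℝ[X]) (hP : 0 < P.natDegree)
    (hst : ∀ z : ℂ, 0 < z.re → Polynomial.aeval z P ≠ 0) :
    (∃ r : ℝ, 0 ≤ r ∧ ∃ g, P = (X + C r) * g) ∨
    (∃ p q : ℝ, 0 ≤ p ∧ 0 ≤ q ∧ ∃ g, P = (X ^ 2 + C p * X + C q) * g) := by
  obtain ⟨w, hw⟩ := Complex.exists_root (f := P.map (algebraMap ℝ ℂ)) (by
    rw [degree_map]; exact natDegree_pos_iff_degree_pos.mp hP)
  have hw' : aeval w P = 0 := by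
    rw [IsRoot, eval_map_algebraMap] at hw; exact hw
  have hre : w.re ≤ 0 := by
    by_contra h
    exact hst w (not_le.mp h) hw'
  by_cases him : w.im = 0
  · left
    refine ⟨-w.re, by linarith, ?_⟩
    have hww : w = algebraMap ℝ ℂ w.re := by
      apply Complex.ext <;> simp [him]
    rw [hww, aeval_algebraMap_apply] at hw'
    have h0 : P.eval w.re = 0 := by
      simpa using hw'
    obtain ⟨g, hg⟩ := dvd_iff_isRoot.mpr h0
    exact ⟨g, by rw [hg]; simp [sub_eq_add_neg]⟩
  · right
    obtain ⟨g, hg⟩ := Polynomial.quadratic_dvd_of_aeval_eq_zero_im_ne_zero P hw' him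
    refine ⟨-(2 * w.re), ‖w‖ ^ 2, by linarith, by positivity, g, ?_⟩
    rw [hg]
    congr 1
    simp only [C_neg]
    ring

open Polynomial in
lemma hs_mul_nonneg (P Q : ℝ[X]) (hP : ∀ i, 0 ≤ P.coeff i) (hQ : ∀ i, 0 ≤ Q.coeff i) (i : ℕ) :
    0 ≤ (P * Q).coeff i := by
  rw [coeff_mul]
  exact Finset.sum_nonneg fun x _ => mul_nonneg (hP _) (hQ _)

open Polynomial in
lemma hs_lin (r : ℝ) (hr : 0 ≤ r) (i : ℕ) : 0 ≤ (X + C r : ℝ[X]).coeff i := by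
  simp only [coeff_add, coeff_X, coeff_C]
  split_ifs <;> linarith

open Polynomial in
lemma hs_quad (p q : ℝ) (hp : 0 ≤ p) (hq : 0 ≤ q) (i : ℕ) :
    0 ≤ (X ^ 2 + C p * X + C q : ℝ[X]).coeff i := by
  simp only [coeff_add, coeff_X_pow, coeff_C_mul, coeff_X, coeff_C]
  split_ifs <;> linarith

open Polynomial in
lemma hs_monic_quad (p q : ℝ) :
    (X ^ 2 + C p * X + C q : ℝ[X]).Monic ∧ (X ^ 2 + C p * X + C q : ℝ[X]).natDegree = 2 := by
  constructor
  · monicity!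
  · compute_degree!

open Polynomial in
lemma hs_nonneg (N : ℕ) : ∀ P : ℝ[X], P.natDegree ≤ N → 0 < P.leadingCoeff →
    (∀ z : ℂ, 0 < z.re → Polynomial.aeval z P ≠ 0) → ∀ i, 0 ≤ P.coeff i := by
  induction N with
  | zero =>
    intro P hd hl _ i
    rw [eq_C_of_natDegree_le_zero hd] at hl ⊢
    rw [leadingCoeff_C] at hl
    rw [coeff_C]
    split_ifs <;> linarith
  | succ N ih =>
    intro P hd hl hst
    rcases Nat.eq_zero_or_pos P.natDegree with h0 | hpos
    · exact ih P (by omega) hl hst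
    have key : ∀ Q g : ℝ[X], Q.Monic → 0 < Q.natDegree → P = Q * g → ∀ i, 0 ≤ g.coeff i := by
      intro Q g hQ hQd hPg
      have hlg : 0 < g.leadingCoeff := by
        rw [hPg, leadingCoeff_mul, hQ.leadingCoeff, one_mul] at hl; exact hl
      have hg0 : g ≠ 0 := by
        rintro rfl; simp at hlg
      apply ih g _ hlg
      · intro z hz h
        apply hst z hz
        rw [hPg, map_mul, h, mul_zero]
      · rw [hPg, hQ.natDegree_mul' hg0] at hd
        omega
    rcases hs_factor P hpos hst with ⟨r, hr, g, hg⟩ | ⟨p, q, hp, hq, g, hg⟩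
    · have := key _ g (monic_X_add_C r) (by simp) hg
      rw [hg]
      exact hs_mul_nonneg _ _ (hs_lin r hr) this
    · have := key _ g (hs_monic_quad p q).1 (by rw [(hs_monic_quad p q).2]; norm_num) hg
      rw [hg]
      exact hs_mul_nonneg _ _ (hs_quad p q hp hq) this

/-- For a Hurwitz-stable univariate real polynomial `f = Σ_{i=0}^n a_i z^i` of degree at most
`n ≥ 2` with nonnegative coefficients (nonvanishing on the open right half-plane), one has
`a_n·a_0 ≤ max (a_1·a_{n-1}) (a_2·a_{n-2})`. -/
theorem hurwitz_stable_coeff_inequality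
    (n : ℕ) (hn : 2 ≤ n) (f : Polynomial ℝ)
    (hdeg : f.natDegree ≤ n)
    (hcoeff : ∀ i, 0 ≤ f.coeff i)
    (hstable : ∀ z : ℂ, 0 < z.re → Polynomial.aeval z f ≠ 0) :
    f.coeff n * f.coeff 0 ≤
      max (f.coeff 1 * f.coeff (n - 1)) (f.coeff 2 * f.coeff (n - 2)) := by
  rcases Nat.eq_zero_or_pos f.natDegree with h0 | hpos
  · rw [Polynomial.coeff_eq_zero_of_natDegree_lt (show f.natDegree < n by omega), zero_mul]
    exact le_max_of_le_left (mul_nonneg (hcoeff _) (hcoeff _))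
  have hf0 : f ≠ 0 := by
    rintro rfl; simp at hpos
  have hl : 0 < f.leadingCoeff :=
    lt_of_le_of_ne (hcoeff _) (Ne.symm (Polynomial.leadingCoeff_ne_zero.mpr hf0))
  have key : ∀ Q g : Polynomial ℝ, Q.Monic → f = Q * g →
      (∀ i, 0 ≤ g.coeff i) ∧ Q.natDegree + g.natDegree ≤ n := by
    intro Q g hQ hPg
    have hlg : 0 < g.leadingCoeff := by
      rw [hPg, Polynomial.leadingCoeff_mul, hQ.leadingCoeff, one_mul] at hl; exact hl
    have hg0 : g ≠ 0 := by
      rintro rfl; simp at hlg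
    constructor
    · apply hs_nonneg _ g le_rfl hlg
      intro z hz h
      apply hstable z hz
      rw [hPg, map_mul, h, mul_zero]
    · rw [hPg, hQ.natDegree_mul' hg0] at hdeg
      omega
  obtain ⟨m, rfl⟩ := Nat.exists_eq_add_of_le' hn
  rcases hs_factor f hpos hstable with ⟨r, hr, g, hg⟩ | ⟨p, q, hp, hq, g, hg⟩
  · obtain ⟨hgn, hd⟩ := key _ g (Polynomial.monic_X_add_C r) hg
    rw [Polynomial.natDegree_X_add_C] at hd
    have hc : ∀ k, f.coeff (k + 1) = g.coeff k + r * g.coeff (k + 1) := by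
      intro k
      rw [hg, add_mul, Polynomial.coeff_add, Polynomial.coeff_X_mul, Polynomial.coeff_C_mul]
    have hc0 : f.coeff 0 = r * g.coeff 0 := by
      rw [hg, add_mul, Polynomial.coeff_add, Polynomial.coeff_C_mul]; simp
    apply le_max_of_le_left
    have e : m + 2 - 1 = m + 1 := by omega
    rw [e, hc (m + 1), hc m, hc0, hc 0,
      Polynomial.coeff_eq_zero_of_natDegree_lt (show g.natDegree < m + 1 + 1 by omega)]
    have h1 := mul_nonneg hr (hgn (0 + 1))
    have h2 := mul_nonneg hr (hgn (m + 1))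
    calc _ = g.coeff 0 * (r * g.coeff (m + 1)) := by ring
      _ ≤ _ := mul_le_mul (by linarith) (by linarith [hgn m]) h2 (by linarith [hgn 0])
  · obtain ⟨hgn, hd⟩ := key _ g (hs_monic_quad p q).1 hg
    rw [(hs_monic_quad p q).2] at hd
    have hc : ∀ k, f.coeff (k + 2) = g.coeff k + p * g.coeff (k + 1) + q * g.coeff (k + 2) := by
      intro k
      rw [hg, add_mul, add_mul, mul_assoc, Polynomial.coeff_add, Polynomial.coeff_add,
        Polynomial.coeff_X_pow_mul, Polynomial.coeff_C_mul, Polynomial.coeff_C_mul,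
        Polynomial.coeff_X_mul]
    have hc0 : f.coeff 0 = q * g.coeff 0 := by
      rw [hg, Polynomial.mul_coeff_zero]; simp
    have hlow : q * g.coeff m ≤ f.coeff m := by
      have h1 := hs_mul_nonneg _ _ (hs_quad p 0 hp le_rfl) hgn m
      have h2 : f = (Polynomial.X ^ 2 + Polynomial.C p * Polynomial.X + Polynomial.C 0) * g
          + Polynomial.C q * g := by
        rw [hg, Polynomial.C_0]; ring
      rw [h2, Polynomial.coeff_add, Polynomial.coeff_C_mul]
      linarith
    apply le_max_of_le_right
    have e : m + 2 - 2 = m := by omega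
    have h2 : g.coeff 0 ≤ f.coeff 2 := by
      have := hc 0
      rw [zero_add] at this
      rw [this]
      linarith [mul_nonneg hp (hgn (0 + 1)), mul_nonneg hq (hgn 2)]
    rw [e, hc m, hc0,
      Polynomial.coeff_eq_zero_of_natDegree_lt (show g.natDegree < m + 1 by omega),
      Polynomial.coeff_eq_zero_of_natDegree_lt (show g.natDegree < m + 2 by omega)]
    calc _ = g.coeff 0 * (q * g.coeff m) := by ring
      _ ≤ _ := mul_le_mul h2 hlow (mul_nonneg hq (hgn m)) (hcoeff 2)
end

section
/- Let t ≥ 2 and let f(z) = Σ_{i=0}^t a_{2i} z^{2i} be a univariate polynomial with real coefficients of degree at most 2t in which all odd-degree coefficients vanish and a_{2i} ≥ 0 for all i. If f(z) ≠ 0 for every z in the open sector Γ_{1/2} = {z ∈ ℂ∖{0} : |arg z| < π/4}, then a_0·a_{2t} ≤ max{ a_2·a_{2t−2}, a_4·a_{2t−4} }. -/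
open Polynomial in
/-- Factor off a real linear or quadratic factor with nonnegative coefficients. -/
lemma hss_factor (g : ℝ[X]) (hd : 0 < g.natDegree)
    (hs : ∀ w : ℂ, 0 < w.re → aeval w g ≠ 0) :
    (∃ p : ℝ, 0 ≤ p ∧ ∃ h : ℝ[X], g = (X + C p) * h) ∨
    (∃ c d : ℝ, 0 ≤ c ∧ 0 ≤ d ∧ ∃ h : ℝ[X], g = (X ^ 2 + C c * X + C d) * h) := by
  obtain ⟨z, hz⟩ := IsAlgClosed.exists_aeval_eq_zero ℂ g (by
    exact (Polynomial.natDegree_pos_iff_degree_pos.mp hd).ne')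
  have hre : z.re ≤ 0 := by
    by_contra hh
    exact hs z (not_le.mp hh) hz
  by_cases him : z.im = 0
  · left
    refine ⟨-z.re, by linarith, ?_⟩
    have hzr : z = algebraMap ℝ ℂ z.re := by
      apply Complex.ext <;> simp [him]
    have h0 : g.IsRoot z.re := by
      rw [hzr, aeval_algebraMap_apply] at hz
      simpa [IsRoot] using hz
    obtain ⟨h, hh⟩ := dvd_iff_isRoot.mpr h0
    exact ⟨h, by rw [hh]; simp [sub_eq_add_neg]⟩
  · right
    obtain ⟨h, hh⟩ := g.quadratic_dvd_of_aeval_eq_zero_im_ne_zero hz him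
    refine ⟨-(2 * z.re), ‖z‖ ^ 2, by linarith, by positivity, h, ?_⟩
    rw [hh]; simp [sub_eq_add_neg]

open Polynomial in
lemma hss_lin (p : ℝ) (h : ℝ[X]) (n : ℕ) :
    ((X + C p) * h).coeff (n + 1) = h.coeff n + p * h.coeff (n + 1) := by
  simp [add_mul]

open Polynomial in
lemma hss_lin_zero (p : ℝ) (h : ℝ[X]) :
    ((X + C p) * h).coeff 0 = p * h.coeff 0 := by
  simp [add_mul]

open Polynomial in
lemma hss_quad (c d : ℝ) (h : ℝ[X]) (n : ℕ) :
    ((X ^ 2 + C c * X + C d) * h).coeff (n + 2) =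
      h.coeff n + c * h.coeff (n + 1) + d * h.coeff (n + 2) := by
  simp [add_mul, mul_assoc, coeff_X_pow_mul]

open Polynomial in
lemma hss_quad_one (c d : ℝ) (h : ℝ[X]) :
    ((X ^ 2 + C c * X + C d) * h).coeff 1 = c * h.coeff 0 + d * h.coeff 1 := by
  simp [add_mul, mul_assoc, coeff_X_pow_mul']

open Polynomial in
lemma hss_quad_zero (c d : ℝ) (h : ℝ[X]) :
    ((X ^ 2 + C c * X + C d) * h).coeff 0 = d * h.coeff 0 := by
  simp [add_mul, mul_assoc, coeff_X_pow_mul']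

open Polynomial in
lemma hss_monic_quad (c d : ℝ) : (X ^ 2 + C c * X + C d : ℝ[X]).Monic := by
  monicity!

open Polynomial in
lemma hss_deg_quad (c d : ℝ) : (X ^ 2 + C c * X + C d : ℝ[X]).natDegree = 2 := by
  compute_degree!

open Polynomial in
/-- A real polynomial without zeros in the open right half plane and with nonnegative
leading coefficient has nonnegative coefficients. -/
lemma hss_nonneg (n : ℕ) : ∀ g : ℝ[X], g.natDegree = n → 0 ≤ g.leadingCoeff →
    (∀ w : ℂ, 0 < w.re → aeval w g ≠ 0) → ∀ i, 0 ≤ g.coeff i := by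
  induction n using Nat.strong_induction_on with
  | _ n ih =>
  intro g hg hl hs i
  rcases Nat.eq_zero_or_pos n with rfl | hn
  · rw [eq_C_of_natDegree_eq_zero hg] at hl ⊢
    rw [leadingCoeff_C] at hl
    rw [coeff_C]; split_ifs <;> simp [hl]
  have hg0 : g ≠ 0 := by rintro rfl; simp at hg; omega
  rcases hss_factor g (hg ▸ hn) hs with ⟨p, hp, h, rfl⟩ | ⟨c, d, hc, hd, h, rfl⟩
  · have hh0 : h ≠ 0 := right_ne_zero_of_mul hg0
    have hdg := (monic_X_add_C p).natDegree_mul' hh0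
    rw [natDegree_X_add_C, hg] at hdg
    rw [leadingCoeff_mul, (monic_X_add_C p).leadingCoeff, one_mul] at hl
    have H := ih h.natDegree (by omega) h rfl hl (fun w hw h0 => hs w hw (by simp [h0]))
    rcases i with _ | i
    · rw [hss_lin_zero]; exact mul_nonneg hp (H _)
    · rw [hss_lin]; exact add_nonneg (H _) (mul_nonneg hp (H _))
  · have hh0 : h ≠ 0 := right_ne_zero_of_mul hg0
    have hdg := (hss_monic_quad c d).natDegree_mul' hh0
    rw [hss_deg_quad, hg] at hdg
    rw [leadingCoeff_mul, (hss_monic_quad c d).leadingCoeff, one_mul] at hl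
    have H := ih h.natDegree (by omega) h rfl hl (fun w hw h0 => hs w hw (by simp [h0]))
    rcases i with _ | _ | i
    · rw [hss_quad_zero]; exact mul_nonneg hd (H _)
    · rw [hss_quad_one]; exact add_nonneg (mul_nonneg hc (H _)) (mul_nonneg hd (H _))
    · rw [hss_quad]
      exact add_nonneg (add_nonneg (H _) (mul_nonneg hc (H _))) (mul_nonneg hd (H _))

open Polynomial in
lemma hss_main (t : ℕ) (ht : 2 ≤ t) (g : ℝ[X]) (hg : g.natDegree ≤ t)
    (hc : ∀ i, 0 ≤ g.coeff i) (hs : ∀ w : ℂ, 0 < w.re → aeval w g ≠ 0) :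
    g.coeff 0 * g.coeff t ≤
      max (g.coeff 1 * g.coeff (t - 1)) (g.coeff 2 * g.coeff (t - 2)) := by
  by_cases h0 : g.coeff t = 0
  · rw [h0, mul_zero]
    exact le_max_of_le_left (mul_nonneg (hc _) (hc _))
  have hgt : g.natDegree = t := le_antisymm hg (le_natDegree_of_ne_zero h0)
  have hg0 : g ≠ 0 := by rintro rfl; simp at h0
  have hl : 0 ≤ g.leadingCoeff := hc _
  obtain ⟨s, rfl⟩ := Nat.exists_eq_add_of_le' ht
  rcases hss_factor g (by omega) hs with ⟨p, hp, h, rfl⟩ | ⟨c, d, hc', hd, h, rfl⟩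
  · apply le_max_of_le_left
    have hh0 : h ≠ 0 := right_ne_zero_of_mul hg0
    have hdg := (monic_X_add_C p).natDegree_mul' hh0
    rw [natDegree_X_add_C, hgt] at hdg
    rw [leadingCoeff_mul, (monic_X_add_C p).leadingCoeff, one_mul] at hl
    have H := hss_nonneg _ h rfl hl (fun w hw h0 => hs w hw (by simp [h0]))
    have e : h.coeff (s + 1 + 1) = 0 := coeff_eq_zero_of_natDegree_lt (by omega)
    rw [show s + 2 - 1 = s + 1 from rfl, show s + 2 = s + 1 + 1 from rfl, hss_lin_zero,
      hss_lin p h (s + 1), hss_lin p h s, show (1 : ℕ) = 0 + 1 from rfl, hss_lin, e]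
    simp only [zero_add] at *
    have h1 := H 0
    have h2 := H 1
    have h3 := H s
    have h4 := H (s + 1)
    calc p * h.coeff 0 * (h.coeff (s + 1) + p * 0) = h.coeff 0 * (p * h.coeff (s + 1)) := by ring
      _ ≤ _ := by
        apply mul_le_mul <;> first | positivity | skip
        · linarith [mul_nonneg hp h2]
        · linarith
  · apply le_max_of_le_right
    have hh0 : h ≠ 0 := right_ne_zero_of_mul hg0
    have hdg := (hss_monic_quad c d).natDegree_mul' hh0
    rw [hss_deg_quad, hgt] at hdg
    rw [leadingCoeff_mul, (hss_monic_quad c d).leadingCoeff, one_mul] at hl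
    have H := hss_nonneg _ h rfl hl (fun w hw h0 => hs w hw (by simp [h0]))
    have e1 : h.coeff (s + 1) = 0 := coeff_eq_zero_of_natDegree_lt (by omega)
    have e2 : h.coeff (s + 2) = 0 := coeff_eq_zero_of_natDegree_lt (by omega)
    have k0 : h.coeff 0 ≤ ((X ^ 2 + C c * X + C d) * h).coeff 2 := by
      have := hss_quad c d h 0
      simp only [zero_add] at this
      rw [this]
      linarith [mul_nonneg hc' (H 1), mul_nonneg hd (H 2)]
    have k1 : d * h.coeff s ≤ ((X ^ 2 + C c * X + C d) * h).coeff s := by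
      rcases s with _ | _ | s
      · rw [hss_quad_zero]
      · rw [zero_add, hss_quad_one]; linarith [mul_nonneg hc' (H 0)]
      · rw [hss_quad]; linarith [mul_nonneg hc' (H (s + 1)), H s]
    rw [show s + 2 - 2 = s from rfl, hss_quad_zero, hss_quad c d h s, e1, e2]
    calc d * h.coeff 0 * (h.coeff s + c * 0 + d * 0) = h.coeff 0 * (d * h.coeff s) := by ring
      _ ≤ _ := mul_le_mul k0 k1 (mul_nonneg hd (H _)) (hc _)

/-- Square roots of points in the open right half plane. -/
lemma hss_sqrt (w : ℂ) (hw : 0 < w.re) :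
    ∃ z : ℂ, z ≠ 0 ∧ |z.arg| < Real.pi / 4 ∧ z ^ 2 = w := by
  have hw0 : w ≠ 0 := by rintro rfl; simp at hw
  have ha : |w.arg| < Real.pi / 2 := Complex.abs_arg_lt_pi_div_two_iff.mpr (Or.inl hw)
  have hpi := Real.pi_pos
  rw [abs_lt] at ha
  have him : (Complex.log w / 2).im = w.arg / 2 := by
    rw [show (2 : ℂ) = ((2 : ℝ) : ℂ) by norm_num, Complex.div_ofReal_im, Complex.log_im]
  refine ⟨Complex.exp (Complex.log w / 2), Complex.exp_ne_zero _, ?_, ?_⟩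
  · rw [← Complex.log_im, Complex.log_exp (by rw [him]; linarith) (by rw [him]; linarith), him,
      abs_lt]
    constructor <;> linarith
  · rw [← Complex.exp_nat_mul]
    push_cast
    rw [mul_div_cancel₀ _ (two_ne_zero), Complex.exp_log hw0]

/-- For a `1/2`-sector-stable univariate real polynomial `f = Σ_{i=0}^t a_{2i} z^{2i}` of degree
at most `2t` (`t ≥ 2`) with nonnegative coefficients and vanishing odd-degree coefficients
(nonvanishing on the open sector `Γ_{1/2} = {z ≠ 0 : |arg z| < π/4}`), one has
`a_0·a_{2t} ≤ max (a_2·a_{2t-2}) (a_4·a_{2t-4})`. -/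
theorem half_sector_stable_coeff_inequality
    (t : ℕ) (ht : 2 ≤ t) (f : Polynomial ℝ)
    (hdeg : f.natDegree ≤ 2 * t)
    (hodd : ∀ i, f.coeff (2 * i + 1) = 0)
    (hcoeff : ∀ i, 0 ≤ f.coeff i)
    (hstable : ∀ z : ℂ, z ≠ 0 → |z.arg| < Real.pi / 4 → Polynomial.aeval z f ≠ 0) :
    f.coeff 0 * f.coeff (2 * t) ≤
      max (f.coeff 2 * f.coeff (2 * t - 2)) (f.coeff 4 * f.coeff (2 * t - 4)) := by
  have hex : Polynomial.expand ℝ 2 (Polynomial.contract 2 f) = f := by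
    ext n
    rw [Polynomial.coeff_expand (by norm_num)]
    split_ifs with h
    · rw [Polynomial.coeff_contract (by norm_num), Nat.div_mul_cancel h]
    · obtain ⟨k, rfl⟩ : ∃ k, n = 2 * k + 1 := ⟨n / 2, by omega⟩
      exact (hodd k).symm
  have key := hss_main t ht (Polynomial.contract 2 f) ?_ ?_ ?_
  · simp only [Polynomial.coeff_contract (two_ne_zero)] at key
    rw [show 2 * t - 2 = (t - 1) * 2 by omega, show 2 * t - 4 = (t - 2) * 2 by omega,
      mul_comm 2 t]
    simpa using key
  · have := congrArg Polynomial.natDegree hex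
    rw [Polynomial.natDegree_expand] at this
    omega
  · intro i
    rw [Polynomial.coeff_contract (two_ne_zero)]
    exact hcoeff _
  · intro w hw h0
    obtain ⟨z, hz, hza, rfl⟩ := hss_sqrt w hw
    apply hstable z hz hza
    rw [← hex, Polynomial.expand_aeval, h0]
end

section
/- Let n ≥ k ≥ 1, β ≥ 1, and α ∈ (0,1]. Let μ be a function from the k-element subsets of [n]={1,…,n} to the nonnegative reals satisfying β-strong approximate basis exchange. Let P_1, …, P_m be a partition of [n], and for each i let C_i be a k-element subset of P_i with μ(C_i) > 0 such that μ(C_i) ≥ α·μ(T) for every k-element subset T of P_i with |C_i ∖ T| ≤ 1. Set C := C_1 ∪ ⋯ ∪ C_m. Then (β/α)^k · max{ μ(S) : S a k-element subset of C } ≥ max{ μ(S) : S a k-element subset of [n] }. -/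
open Finset

/-- If `μ` satisfies `β`-strong approximate basis exchange and each `C_i` is an `α`-approximate
local maximum (in the 1-neighborhood) of `μ` inside the part `P_i` of a partition of `[n]`,
then the union `C = C_1 ∪ ⋯ ∪ C_m` is a `(β/α)^k`-approximate core-set: the best `k`-subset of
`C` is within a `(β/α)^k` factor of the global maximum. -/
theorem strong_basis_exchange_core_set
    (n k m : ℕ) (β α : ℝ)
    (hk : 1 ≤ k) (hkn : k ≤ n)
    (hβ : 1 ≤ β) (hα : 0 < α) (hα1 : α ≤ 1)
    (μ : Finset (Fin n) → ℝ)
    (hμnonneg : ∀ S : Finset (Fin n), S.card = k → 0 ≤ μ S)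
    (hexch : ∀ S T : Finset (Fin n), S.card = k → T.card = k → ∀ j ∈ T \ S,
      ∃ i ∈ S \ T,
        μ S * μ T ≤ β * μ (insert j (S.erase i)) * μ (insert i (T.erase j)))
    (P : Fin m → Finset (Fin n))
    (hdisj : ∀ i j : Fin m, i ≠ j → Disjoint (P i) (P j))
    (hcover : Finset.univ.biUnion P = Finset.univ)
    (C : Fin m → Finset (Fin n))
    (hCsub : ∀ i, C i ⊆ P i)
    (hCcard : ∀ i, (C i).card = k)
    (hCpos : ∀ i, 0 < μ (C i))
    (hloc : ∀ i : Fin m, ∀ T ⊆ P i, T.card = k → ((C i) \ T).card ≤ 1 →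
      α * μ T ≤ μ (C i)) :
    ∀ Sstar : Finset (Fin n), Sstar.card = k →
      μ Sstar ≤ (β / α) ^ k *
        ((Finset.univ.biUnion C).powersetCard k).fold max 0 μ := by
  classical
  have hr : 1 ≤ β / α := by
    rw [le_div_iff₀ hα]; linarith
  have hr0 : 0 ≤ β / α := by linarith
  have hF0 : 0 ≤ ((Finset.univ.biUnion C).powersetCard k).fold max 0 μ := by
    rw [Finset.le_fold_max]; left; exact le_rfl
  have main : ∀ d : ℕ, ∀ S : Finset (Fin n), S.card = k →
      (S \ Finset.univ.biUnion C).card = d →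
      μ S ≤ (β / α) ^ d * ((Finset.univ.biUnion C).powersetCard k).fold max 0 μ := by
    intro d
    induction d with
    | zero =>
      intro S hS hd
      rw [pow_zero, one_mul, Finset.le_fold_max]
      right
      refine ⟨S, ?_, le_rfl⟩
      rw [Finset.mem_powersetCard]
      exact ⟨Finset.sdiff_eq_empty_iff_subset.mp (Finset.card_eq_zero.mp hd), hS⟩
    | succ d ih =>
      intro S hS hd
      obtain ⟨j, hj⟩ : (S \ Finset.univ.biUnion C).Nonempty := by
        rw [← Finset.card_pos]; omega
      have hjS := (Finset.mem_sdiff.mp hj).1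
      have hjC := (Finset.mem_sdiff.mp hj).2
      have hjP : j ∈ Finset.univ.biUnion P := by rw [hcover]; exact Finset.mem_univ j
      obtain ⟨i, -, hi⟩ := Finset.mem_biUnion.mp hjP
      have hjCi : j ∉ C i := fun h =>
        hjC (Finset.mem_biUnion.mpr ⟨i, Finset.mem_univ i, h⟩)
      obtain ⟨x, hx, hle⟩ := hexch (C i) S (hCcard i) hS j
        (Finset.mem_sdiff.mpr ⟨hjS, hjCi⟩)
      obtain ⟨hxC, hxS⟩ := Finset.mem_sdiff.mp hx
      have hxU : x ∈ Finset.univ.biUnion C :=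
        Finset.mem_biUnion.mpr ⟨i, Finset.mem_univ i, hxC⟩
      have hT : (insert j ((C i).erase x)).card = k := by
        rw [Finset.card_insert_of_notMem (fun h => hjCi (Finset.mem_of_mem_erase h)),
          Finset.card_erase_of_mem hxC, hCcard i]
        omega
      have hS' : (insert x (S.erase j)).card = k := by
        rw [Finset.card_insert_of_notMem (fun h => hxS (Finset.mem_of_mem_erase h)),
          Finset.card_erase_of_mem hjS, hS]
        omega
      have hl := hloc i (insert j ((C i).erase x))
        (Finset.insert_subset hi ((Finset.erase_subset _ _).trans (hCsub i))) hT (by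
          rw [Finset.card_le_one]
          intro a ha b hb
          simp only [Finset.mem_sdiff, Finset.mem_insert, Finset.mem_erase] at ha hb
          grind)
      have hd' : (insert x (S.erase j) \ Finset.univ.biUnion C).card = d := by
        rw [Finset.insert_sdiff_of_mem _ hxU, Finset.erase_sdiff_comm,
          Finset.card_erase_of_mem hj, hd]
        rfl
      have h1 := ih _ hS' hd'
      have hn := hμnonneg _ hS'
      have h2 : μ S ≤ β / α * μ (insert x (S.erase j)) := by
        rw [div_mul_eq_mul_div, le_div_iff₀ hα]
        refine le_of_mul_le_mul_left ?_ (hCpos i)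
        have h3 := mul_le_mul_of_nonneg_left hle hα.le
        have h4 := mul_le_mul_of_nonneg_right hl
          (mul_nonneg (by linarith : (0:ℝ) ≤ β) hn)
        nlinarith
      calc μ S ≤ β / α * μ (insert x (S.erase j)) := h2
        _ ≤ β / α * ((β / α) ^ d *
            ((Finset.univ.biUnion C).powersetCard k).fold max 0 μ) :=
          mul_le_mul_of_nonneg_left h1 hr0
        _ = _ := by ring
  intro S hS
  refine (main _ S hS rfl).trans (mul_le_mul_of_nonneg_right ?_ hF0)
  exact pow_le_pow_right₀ hr (hS ▸ Finset.card_le_card Finset.sdiff_subset)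
end

section
/- Let n ≥ k ≥ 1, β ≥ 1, and α ∈ (0,1]. Let μ be a function from the k-element subsets of [n]={1,…,n} to the nonnegative reals satisfying β-strong approximate basis exchange. Let P ⊆ [n] and let C be a k-element subset of P with μ(C) > 0 such that μ(C) ≥ α·μ(T) for every k-element subset T of P with |C ∖ T| ≤ 1. Then for every k-element subset W of [n] with (W ∩ P) ∖ C nonempty, there exists a k-element subset W' of [n] such that |W' ∖ C| = |W ∖ C| − 1 and μ(W) ≤ (β/α)·μ(W'). -/
open Finset

/-- Core-set distance-reduction step: if `μ` satisfies `β`-strong approximate basis exchange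
and `C ⊆ P` is an `α`-approximate local maximum (in the 1-neighborhood) of `μ` inside `P`,
then any `k`-subset `W` with `(W ∩ P) ∖ C ≠ ∅` can be exchanged towards `C`, losing at most a
`β/α` factor. -/
theorem strong_basis_exchange_core_set_step
    (n k : ℕ) (β α : ℝ)
    (hk : 1 ≤ k) (hkn : k ≤ n)
    (hβ : 1 ≤ β) (hα : 0 < α) (hα1 : α ≤ 1)
    (μ : Finset (Fin n) → ℝ)
    (hμnonneg : ∀ S : Finset (Fin n), S.card = k → 0 ≤ μ S)
    (hexch : ∀ S T : Finset (Fin n), S.card = k → T.card = k → ∀ j ∈ T \ S,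
      ∃ i ∈ S \ T,
        μ S * μ T ≤ β * μ (insert j (S.erase i)) * μ (insert i (T.erase j)))
    (P : Finset (Fin n)) (C : Finset (Fin n))
    (hCsub : C ⊆ P) (hCcard : C.card = k) (hCpos : 0 < μ C)
    (hloc : ∀ T ⊆ P, T.card = k → (C \ T).card ≤ 1 → α * μ T ≤ μ C) :
    ∀ W : Finset (Fin n), W.card = k → ((W ∩ P) \ C).Nonempty →
      ∃ W' : Finset (Fin n), W'.card = k ∧
        (W' \ C).card + 1 = (W \ C).card ∧
        μ W ≤ (β / α) * μ W' := by
  intro W hW hne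
  obtain ⟨j, hj⟩ := hne
  simp only [mem_sdiff, mem_inter] at hj
  obtain ⟨⟨hjW, hjP⟩, hjC⟩ := hj
  obtain ⟨i, hi, hle⟩ := hexch C W hCcard hW j (by simp [hjW, hjC])
  simp only [mem_sdiff] at hi
  obtain ⟨hiC, hiW⟩ := hi
  have hcardW : (insert i (W.erase j)).card = k := by
    rw [card_insert_of_notMem (by simp [hiW]), card_erase_of_mem hjW]
    omega
  have hcardC : (insert j (C.erase i)).card = k := by
    rw [card_insert_of_notMem (by simp [hjC]), card_erase_of_mem hiC]
    omega
  refine ⟨insert i (W.erase j), hcardW, ?_, ?_⟩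
  · have h : insert i (W.erase j) \ C = (W \ C).erase j := by
      ext x
      simp only [mem_sdiff, mem_insert, mem_erase]
      constructor
      · rintro ⟨rfl | h, h2⟩
        · exact absurd hiC h2
        · exact ⟨h.1, h.2, h2⟩
      · rintro ⟨h1, h2, h3⟩
        exact ⟨Or.inr ⟨h1, h2⟩, h3⟩
    rw [h]
    exact card_erase_add_one (by simp [hjW, hjC])
  · have hsub : insert j (C.erase i) ⊆ P :=
      insert_subset hjP ((erase_subset _ _).trans hCsub)
    have hd : (C \ insert j (C.erase i)).card ≤ 1 := by
      have : C \ insert j (C.erase i) ⊆ {i} := by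
        intro x hx
        simp only [mem_sdiff, mem_insert, mem_erase, mem_singleton] at hx ⊢
        by_contra hxi
        exact hx.2 (Or.inr ⟨hxi, hx.1⟩)
      simpa using card_le_card this
    have h1 := hloc _ hsub hcardC hd
    have h2 := hμnonneg _ hcardW
    rw [div_mul_eq_mul_div, le_div_iff₀ hα]
    have h3 : 0 ≤ β * μ (insert i (W.erase j)) := mul_nonneg (by linarith) h2
    have h4 := mul_le_mul_of_nonneg_left h1 h3
    have h5 := mul_le_mul_of_nonneg_left hle hα.le
    refine le_of_mul_le_mul_right ?_ hCpos
    linarith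
end

section
/- Let n ≥ k ≥ 1 and let μ be a function from the k-element subsets of [n]={1,…,n} to the nonnegative reals. For T ⊆ [n] with |T| ≤ k define the induced value μ̄(T) := Σ_{S ⊇ T, |S|=k} μ(S). Let ∅ = S_0 ⊂ S_1 ⊂ ⋯ ⊂ S_k be a greedy chain: for each j, S_{j+1} = S_j ∪ {i_j} where i_j ∉ S_j maximizes μ̄(S_j ∪ {i}) over all i ∉ S_j. Then binom(n,k) · μ(S_k) ≥ max{ μ(S) : S a k-element subset of [n] }. -/
open Finset

/-- The induced value `μ̄(T) = Σ_{S ⊇ T, |S| = k} μ(S)` of a subset `T` of `[n]`. -/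
noncomputable def inducedVal {n : ℕ} (k : ℕ) (μ : Finset (Fin n) → ℝ)
    (T : Finset (Fin n)) : ℝ :=
  ∑ S ∈ (Finset.univ.powersetCard k).filter (fun S => T ⊆ S), μ S

theorem inducedVal_sum_insert {n : ℕ} (k : ℕ) (μ : Finset (Fin n) → ℝ) (T : Finset (Fin n)) :
    ∑ b ∈ Tᶜ, inducedVal k μ (insert b T) = ((k : ℝ) - T.card) * inducedVal k μ T := by
  unfold inducedVal
  rw [Finset.mul_sum]
  have h1 : ∀ b ∈ Tᶜ, ∑ S ∈ (Finset.univ.powersetCard k).filter (fun S => insert b T ⊆ S), μ S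
      = ∑ S ∈ (Finset.univ.powersetCard k).filter (fun S => T ⊆ S), if b ∈ S then μ S else 0 := by
    intro b _
    rw [← Finset.sum_filter, Finset.filter_filter]
    refine Finset.sum_congr ?_ (fun _ _ => rfl)
    ext S
    simp only [Finset.mem_filter, Finset.insert_subset_iff]
    tauto
  rw [Finset.sum_congr rfl h1, Finset.sum_comm]
  refine Finset.sum_congr rfl ?_
  intro S hS
  simp only [Finset.mem_filter, Finset.mem_powersetCard] at hS
  rw [← Finset.sum_filter, Finset.sum_const, nsmul_eq_mul]
  have h2 : Tᶜ.filter (fun b => b ∈ S) = S \ T := by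
    ext b
    simp only [Finset.mem_filter, Finset.mem_compl, Finset.mem_sdiff]
    tauto
  rw [h2, Finset.card_sdiff_of_subset hS.2, Nat.cast_sub (Finset.card_le_card hS.2), hS.1.2]

/-- INDUCED-GREEDY guarantee: the greedy chain `∅ = S_0 ⊂ S_1 ⊂ ⋯ ⊂ S_k`, where each step adds
an element maximizing the induced value `μ̄`, ends in a set `S_k` with
`binom(n,k)·μ(S_k) ≥ max μ`. -/
theorem induced_greedy_guarantee
    (n k : ℕ) (hk : 1 ≤ k) (hkn : k ≤ n)
    (μ : Finset (Fin n) → ℝ)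
    (hμnonneg : ∀ S : Finset (Fin n), S.card = k → 0 ≤ μ S)
    (Sc : ℕ → Finset (Fin n))
    (h0 : Sc 0 = ∅)
    (hgreedy : ∀ j < k, ∃ a ∉ Sc j, Sc (j + 1) = insert a (Sc j) ∧
      ∀ b ∉ Sc j, inducedVal k μ (insert b (Sc j)) ≤ inducedVal k μ (insert a (Sc j))) :
    ∀ T : Finset (Fin n), T.card = k →
      μ T ≤ (n.choose k : ℝ) * μ (Sc k) := by
  have hcard : ∀ j ≤ k, (Sc j).card = j := by
    intro j
    induction j with
    | zero => intro _; simp [h0]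
    | succ j ih =>
      intro hj
      obtain ⟨a, ha, he, _⟩ := hgreedy j (by omega)
      rw [he, Finset.card_insert_of_notMem ha, ih (by omega)]
  have hinv : ∀ j ≤ k, inducedVal k μ ∅ * ((n - j).choose (k - j) : ℝ)
      ≤ (n.choose k : ℝ) * inducedVal k μ (Sc j) := by
    intro j
    induction j with
    | zero => intro _; simp [h0, mul_comm]
    | succ j ih =>
      intro hj
      have ih := ih (by omega)
      obtain ⟨a, ha, he, hb⟩ := hgreedy j (by omega)
      have hc := hcard j (by omega)
      have hs := inducedVal_sum_insert k μ (Sc j)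
      have hle : ∑ b ∈ (Sc j)ᶜ, inducedVal k μ (insert b (Sc j))
          ≤ (n - (j + 1) + 1 : ℕ) * inducedVal k μ (Sc (j + 1)) := by
        have h3 := Finset.sum_le_card_nsmul (Sc j)ᶜ (fun b => inducedVal k μ (insert b (Sc j)))
          (inducedVal k μ (insert a (Sc j))) (fun b h => hb b (by simpa using h))
        rw [Finset.card_compl, hc, Fintype.card_fin, nsmul_eq_mul, ← he] at h3
        have h4 : n - (j + 1) + 1 = n - j := by omega
        rw [h4]
        exact h3
      rw [hs, hc] at hle
      have hch := Nat.add_one_mul_choose_eq (n - (j + 1)) (k - (j + 1))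
      have e1 : n - j = n - (j + 1) + 1 := by omega
      have e2 : k - j = k - (j + 1) + 1 := by omega
      have e3 : (k : ℝ) - j = (k - (j + 1) + 1 : ℕ) := by
        rw [← e2, Nat.cast_sub (by omega)]
      rw [e1, e2] at ih
      rw [e3] at hle
      have hch' : ((n - (j + 1) + 1 : ℕ) : ℝ) * ((n - (j + 1)).choose (k - (j + 1)) : ℝ)
          = ((n - (j + 1) + 1).choose (k - (j + 1) + 1) : ℝ) * ((k - (j + 1) + 1 : ℕ) : ℝ) := by
        exact_mod_cast hch
      have hN : (0 : ℝ) < ((n - (j + 1) + 1 : ℕ) : ℝ) := by positivity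
      have hK : (0 : ℝ) ≤ ((k - (j + 1) + 1 : ℕ) : ℝ) := by positivity
      have hC : (0 : ℝ) ≤ (n.choose k : ℝ) := by positivity
      have t1 := mul_le_mul_of_nonneg_right ih hK
      have t2 := mul_le_mul_of_nonneg_left hle hC
      refine le_of_mul_le_mul_left ?_ hN
      calc _ = inducedVal k μ ∅ * (((n - (j + 1) + 1 : ℕ) : ℝ)
              * ((n - (j + 1)).choose (k - (j + 1)) : ℝ)) := by ring
        _ = _ := by rw [hch', ← mul_assoc]
        _ ≤ _ := t1
        _ = _ := by rw [mul_assoc, mul_comm (inducedVal k μ (Sc j))]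
        _ ≤ _ := t2
        _ = _ := by ring
  intro T hT
  have hk' := hinv k le_rfl
  have hck := hcard k le_rfl
  have hlast : inducedVal k μ (Sc k) = μ (Sc k) := by
    unfold inducedVal
    have : (Finset.univ.powersetCard k).filter (fun S => Sc k ⊆ S) = {Sc k} := by
      ext S
      simp only [Finset.mem_filter, Finset.mem_powersetCard, Finset.mem_singleton]
      constructor
      · rintro ⟨⟨_, h⟩, hs⟩
        exact (Finset.eq_of_subset_of_card_le hs (by omega)).symm
      · rintro rfl
        exact ⟨⟨Finset.subset_univ _, hck⟩, subset_rfl⟩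
    rw [this, Finset.sum_singleton]
  have hfirst : μ T ≤ inducedVal k μ ∅ := by
    unfold inducedVal
    refine Finset.single_le_sum (f := μ) ?_ ?_
    · intro S hS
      simp only [Finset.mem_filter, Finset.mem_powersetCard] at hS
      exact hμnonneg S hS.1.2
    · simp [Finset.mem_powersetCard, hT]
  rw [hlast] at hk'
  simp only [Nat.sub_self, Nat.choose_zero_right, Nat.cast_one, mul_one] at hk'
  exact hfirst.trans hk'
end
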